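/- arXiv:2006.07366 — 3 statements merged into one kernel-verified Lean document; each statement's English description precedes it below -/
import Mathlib

section
/- There exist universal constants C, c > 0 such that for every finite type α, every probability mass function p on α, every integer n ≥ 2, and every ε > 0, the collision estimator satisfies P[|Q̃ − Q| > ε] ≤ C · exp(−c · min(ε²/v², ε/b, n·√ε)), where v² = (∑_x p(x)²)/n² + (∑_x p(x)³)/n and b = (max_x p(x))/n. -/
open MeasureTheory ProbabilityTheory Finset

/-- The collision estimator: fraction of colliding ordered pairs in the sample. -/
noncomputable def collEst {α : Type} [DecidableEq α] (n : ℕ) (ω : Fin n → α) : ℝ :=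
  ((Finset.univ.filter fun ij : Fin n × Fin n => ij.1 ≠ ij.2 ∧ ω ij.1 = ω ij.2).card : ℝ) /
    ((n : ℝ) * ((n : ℝ) - 1))

/-!
Reveal the samples one at a time. A new sample `y` adds twice its current occupancy to the number
`S` of collisions, so `exp (σ S)` times the exponential of minus an explicit compensator is a
supermartingale. As long as no occupancy exceeds a multiple of `1 / |σ|`, a second order Taylor
expansion bounds the compensator by a linear and a quadratic term. The linear one is a weighted sum
of the masses of the independent samples, hence obeys a Bernstein bound. The quadratic one is at
most a sum over the atoms of increasing functions of the final occupancies; since these are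
negatively associated, its exponential moment is at most a product over the atoms. The probability
that some occupancy is larger is bounded by a factorial moment; this event is responsible for the
term `n √ε` in the exponent.
-/

namespace CollisionEstimator

open Real (exp)

section ExponentialMoments

variable {Ω : Type*} [MeasurableSpace Ω] {ν : Measure Ω}

lemma integral_exp_sub_const_le_one_iff {f : Ω → ℝ} {c : ℝ} :
    ∫ ω, exp (f ω - c) ∂ν ≤ 1 ↔ ∫ ω, exp (f ω) ∂ν ≤ exp c := by
  simp only [Real.exp_sub, integral_div, div_le_one (Real.exp_pos c)]

lemma integral_exp_midpoint_le_one {f g : Ω → ℝ}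
    (hf : Integrable (fun ω ↦ exp (f ω)) ν) (hg : Integrable (fun ω ↦ exp (g ω)) ν)
    (hf1 : ∫ ω, exp (f ω) ∂ν ≤ 1) (hg1 : ∫ ω, exp (g ω) ∂ν ≤ 1) :
    ∫ ω, exp ((f ω + g ω) / 2) ∂ν ≤ 1 := by
  have midpoint (ω : Ω) : exp ((f ω + g ω) / 2) ≤ (exp (f ω) + exp (g ω)) / 2 := by
    have h := convexOn_exp.2 (Set.mem_univ (f ω)) (Set.mem_univ (g ω))
      (by norm_num : (0 : ℝ) ≤ 1 / 2) (by norm_num : (0 : ℝ) ≤ 1 / 2) (by norm_num)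
    simp only [smul_eq_mul] at h
    rw [show (f ω + g ω) / 2 = 1 / 2 * f ω + 1 / 2 * g ω by ring]
    linarith
  calc ∫ ω, exp ((f ω + g ω) / 2) ∂ν
      ≤ ∫ ω, (exp (f ω) + exp (g ω)) / 2 ∂ν :=
        integral_mono_of_nonneg (.of_forall fun ω ↦ (Real.exp_pos _).le)
          ((hf.add hg).div_const 2) (.of_forall midpoint)
    _ = (∫ ω, exp (f ω) ∂ν + ∫ ω, exp (g ω) ∂ν) / 2 := by
        rw [integral_div, integral_add hf hg]
    _ ≤ 1 := by linarith

lemma integral_exp_le_of_abs_le_one [IsProbabilityMeasure ν] {f : Ω → ℝ}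
    (hf : AEStronglyMeasurable f ν) (hf1 : ∀ ω, |f ω| ≤ 1) :
    ∫ ω, exp (f ω) ∂ν ≤ exp (∫ ω, f ω ∂ν + ∫ ω, f ω ^ 2 ∂ν) := by
  have hf_int : Integrable f ν := .of_bound hf 1 (.of_forall hf1)
  have hf2_int : Integrable (fun ω ↦ f ω ^ 2) ν :=
    .of_bound (hf.pow 2) 1 (.of_forall fun ω ↦ by simpa using hf1 ω)
  have one_add_int : Integrable (fun ω ↦ 1 + f ω) ν := (integrable_const 1).add hf_int
  calc ∫ ω, exp (f ω) ∂ν ≤ ∫ ω, (1 + f ω + f ω ^ 2) ∂ν := by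
        refine integral_mono_of_nonneg (.of_forall fun ω ↦ (Real.exp_pos _).le)
          (one_add_int.add hf2_int) (.of_forall fun ω ↦ ?_)
        have := (abs_le.1 (Real.abs_exp_sub_one_sub_id_le (hf1 ω))).2
        dsimp only
        linarith
    _ = (∫ ω, f ω ∂ν + ∫ ω, f ω ^ 2 ∂ν) + 1 := by
        rw [integral_add one_add_int hf2_int, integral_add (integrable_const 1) hf_int,
          integral_const, probReal_univ, one_smul]
        ring
    _ ≤ _ := Real.add_one_le_exp _

lemma integral_exp_sum_le_of_abs_le_one {ι : Type*} [Fintype ι] {X : ι → Type*}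
    [∀ i, MeasurableSpace (X i)] {ν : ∀ i, Measure (X i)} [∀ i, IsProbabilityMeasure (ν i)]
    {f : ∀ i, X i → ℝ} (hf : ∀ i, AEStronglyMeasurable (f i) (ν i)) (hf1 : ∀ i x, |f i x| ≤ 1) :
    ∫ ω, exp (∑ i, f i (ω i)) ∂Measure.pi ν ≤
      exp (∑ i, (∫ x, f i x ∂ν i + ∫ x, f i x ^ 2 ∂ν i)) := by
  simp only [Real.exp_sum, integral_fintype_prod_eq_prod fun i x ↦ exp (f i x)]
  exact Finset.prod_le_prod (fun i _ ↦ integral_nonneg fun x ↦ (Real.exp_pos _).le)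
    fun i _ ↦ integral_exp_le_of_abs_le_one (hf i) (hf1 i)

end ExponentialMoments

section Sample

variable {α : Type*} [MeasurableSpace α] {μ : Measure α}

/-- The law of `n` independent samples from `μ`. -/
noncomputable abbrev sampleLaw (μ : Measure α) (n : ℕ) : Measure (Fin n → α) :=
  Measure.pi fun _ ↦ μ

lemma integral_sampleLaw_zero [MeasurableSingletonClass α] (F : (Fin 0 → α) → ℝ) :
    ∫ ω, F ω ∂sampleLaw μ 0 = F Fin.elim0 := by
  rw [sampleLaw, Measure.pi_of_empty _ Fin.elim0, integral_dirac]

lemma integral_sampleLaw_succ [SigmaFinite μ] {n : ℕ} {F : (Fin (n + 1) → α) → ℝ}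
    (hF : Integrable F (sampleLaw μ (n + 1))) :
    ∫ ω, F ω ∂sampleLaw μ (n + 1) = ∫ y, ∫ ω, F (Fin.cons y ω) ∂sampleLaw μ n ∂μ := by
  have hmp := (measurePreserving_piFinSuccAbove (fun _ : Fin (n + 1) ↦ μ) 0).symm
  have hF_cons := (hmp.integrable_comp_emb (MeasurableEquiv.measurableEmbedding _)).2 hF
  rw [← hmp.integral_comp']
  refine (integral_prod _ hF_cons).trans ?_
  simp [MeasurableEquiv.piFinSuccAbove, Fin.insertNthEquiv]

end Sample

section Occupancy

variable {α : Type*} [DecidableEq α] {n : ℕ}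

/-- The number of times `x` occurs in the sample `ω`. -/
def occupancy (ω : Fin n → α) (x : α) : ℕ := #{i | ω i = x}

/-- The number of ordered pairs of distinct indices at which the sample `ω` takes the same value,
that is, the numerator of `collEst`. -/
def collisionCount (ω : Fin n → α) : ℕ :=
  #{ij : Fin n × Fin n | ij.1 ≠ ij.2 ∧ ω ij.1 = ω ij.2}

lemma occupancy_cons (y : α) (ω : Fin n → α) (x : α) :
    occupancy (Fin.cons y ω : Fin (n + 1) → α) x = occupancy ω x + if y = x then 1 else 0 := by
  simp only [occupancy, Fin.card_filter_univ_succ, Fin.cons_zero, Fin.cons_succ]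
  split_ifs <;> rfl

lemma occupancy_le_occupancy_cons (y : α) (ω : Fin n → α) (x : α) :
    occupancy ω x ≤ occupancy (Fin.cons y ω : Fin (n + 1) → α) x :=
  occupancy_cons y ω x ▸ Nat.le_add_right _ _

lemma occupancy_zero (ω : Fin 0 → α) (x : α) : occupancy ω x = 0 := by simp [occupancy]

lemma collisionCount_zero (ω : Fin 0 → α) : collisionCount ω = 0 := by simp [collisionCount]

lemma collisionCount_cons (y : α) (ω : Fin n → α) :
    collisionCount (Fin.cons y ω : Fin (n + 1) → α) = collisionCount ω + 2 * occupancy ω y := by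
  simp only [collisionCount, occupancy, card_filter, Fintype.sum_prod_type, Fin.sum_univ_succ,
    Fin.cons_zero, Fin.cons_succ, ne_eq, not_true_eq_false, false_and, if_false, Fin.succ_ne_zero,
    not_false_eq_true, true_and, Fin.succ_inj, sum_add_distrib, (Fin.succ_ne_zero _).symm,
    eq_comm (a := y)]
  ring

end Occupancy

section Compensator

variable {α : Type*} [DecidableEq α] [MeasurableSpace α] {μ : Measure α} {n : ℕ}

/-- The compensator of `∑ j, φ (N_{j-1} (X_j))`, where `N_{j-1}` is the occupancy of the samples
seen before `X_j`: the sum over `j` of the conditional expectations `∫ φ (N_{j-1} x) ∂μ(x)`.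
Since `Fin.cons` prepends, the entries of `ω` are seen from the last one to the first. -/
noncomputable def compensator (μ : Measure α) (φ : ℕ → ℝ) : ∀ {n : ℕ}, (Fin n → α) → ℝ
  | 0, _ => 0
  | _ + 1, ω => compensator μ φ (Fin.tail ω) + ∫ x, φ (occupancy (Fin.tail ω) x) ∂μ

lemma compensator_cons (φ : ℕ → ℝ) (y : α) (ω : Fin n → α) :
    compensator μ φ (Fin.cons y ω : Fin (n + 1) → α) =
      compensator μ φ ω + ∫ x, φ (occupancy ω x) ∂μ := by
  simp only [compensator, Fin.tail_cons]

variable [Finite α] [MeasurableSingletonClass α]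

lemma compensator_mono [IsFiniteMeasure μ] {φ ψ : ℕ → ℝ} {ω : Fin n → α}
    (h : ∀ x, ∀ k ≤ occupancy ω x, φ k ≤ ψ k) : compensator μ φ ω ≤ compensator μ ψ ω := by
  induction n with
  | zero => simp only [compensator, le_refl]
  | succ n ih =>
    cases ω using Fin.consCases with | _ y ω =>
    rw [compensator_cons, compensator_cons]
    have h' (x : α) (k : ℕ) (hk : k ≤ occupancy ω x) : φ k ≤ ψ k :=
      h x k (hk.trans (occupancy_le_occupancy_cons y ω x))
    exact add_le_add (ih h') (integral_mono .of_finite .of_finite fun x ↦ h' x _ le_rfl)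

lemma compensator_mul_add [IsFiniteMeasure μ] (a : ℝ) (φ ψ : ℕ → ℝ) (ω : Fin n → α) :
    compensator μ (fun k ↦ a * φ k + ψ k) ω = a * compensator μ φ ω + compensator μ ψ ω := by
  induction n with
  | zero => simp only [compensator, mul_zero, add_zero]
  | succ n ih =>
    cases ω using Fin.consCases with | _ y ω =>
    simp only [compensator_cons, ih]
    rw [integral_add .of_finite .of_finite, integral_const_mul]
    ring

lemma compensator_le_of_monotone [IsFiniteMeasure μ] {φ : ℕ → ℝ} (hφ : Monotone φ)
    (ω : Fin n → α) : compensator μ φ ω ≤ n * ∫ x, φ (occupancy ω x) ∂μ := by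
  induction n with
  | zero => simp [compensator]
  | succ n ih =>
    cases ω using Fin.consCases with | _ y ω =>
    have mono : ∫ x, φ (occupancy ω x) ∂μ ≤
        ∫ x, φ (occupancy (Fin.cons y ω : Fin (n + 1) → α) x) ∂μ :=
      integral_mono .of_finite .of_finite fun x ↦ hφ (occupancy_le_occupancy_cons y ω x)
    calc compensator μ φ (Fin.cons y ω : Fin (n + 1) → α)
        = compensator μ φ ω + ∫ x, φ (occupancy ω x) ∂μ := compensator_cons φ y ω
      _ ≤ (n + 1) * ∫ x, φ (occupancy ω x) ∂μ := by linarith [ih ω]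
      _ ≤ _ := by push_cast; gcongr

lemma integral_occupancy [IsFiniteMeasure μ] (ω : Fin n → α) :
    ∫ x, (occupancy ω x : ℝ) ∂μ = ∑ i, μ.real {ω i} := by
  have occupancy_eq (x : α) :
      (occupancy ω x : ℝ) = ∑ i, Set.indicator {ω i} (fun _ ↦ (1 : ℝ)) x := by
    simp only [occupancy, natCast_card_filter, Set.indicator_apply, Set.mem_singleton_iff,
      eq_comm (a := x)]
  simp only [occupancy_eq]
  rw [integral_finsetSum _ fun _ _ ↦ .of_finite]
  simp only [integral_indicator_const _ (measurableSet_singleton _), smul_eq_mul, mul_one]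

lemma compensator_natCast [IsFiniteMeasure μ] (ω : Fin n → α) :
    compensator μ (fun k ↦ (k : ℝ)) ω = ∑ i : Fin n, (i : ℝ) * μ.real {ω i} := by
  induction n with
  | zero => simp [compensator]
  | succ n ih =>
    cases ω using Fin.consCases with | _ y ω =>
    rw [compensator_cons, ih, integral_occupancy, Fin.sum_univ_succ]
    simp [add_mul, sum_add_distrib]

variable [IsProbabilityMeasure μ]

/-- Given `ω`, a new sample `y` multiplies `exp (σ * collisionCount)` by `exp (2σ N y)`, whose mean
`z` is at most `exp (z - 1)`. -/
lemma integral_exp_collisionCount_cons_le (σ : ℝ) (ω : Fin n → α) :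
    ∫ y, exp (σ * collisionCount (Fin.cons y ω : Fin (n + 1) → α) -
        compensator μ (fun k ↦ exp (2 * σ * k) - 1) (Fin.cons y ω : Fin (n + 1) → α)) ∂μ ≤
      exp (σ * collisionCount ω - compensator μ (fun k ↦ exp (2 * σ * k) - 1) ω) := by
  set a := σ * collisionCount ω - compensator μ (fun k ↦ exp (2 * σ * k) - 1) ω
  set z := ∫ x, exp (2 * σ * occupancy ω x) ∂μ
  have increment : ∫ x, (exp (2 * σ * occupancy ω x) - 1) ∂μ = z - 1 := by
    rw [integral_sub .of_finite .of_finite, integral_const, probReal_univ, one_smul]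
  have split (y : α) : exp (σ * collisionCount (Fin.cons y ω : Fin (n + 1) → α) -
      compensator μ (fun k ↦ exp (2 * σ * k) - 1) (Fin.cons y ω : Fin (n + 1) → α)) =
      exp (a - (z - 1)) * exp (2 * σ * occupancy ω y) := by
    rw [collisionCount_cons, compensator_cons, increment, ← Real.exp_add]
    push_cast
    congr 1
    ring
  calc _ = exp (a - (z - 1)) * z := by simp only [split, integral_const_mul, z]
    _ ≤ exp (a - (z - 1)) * exp (z - 1) := by
        gcongr
        linarith [Real.add_one_le_exp (z - 1)]
    _ = exp a := by rw [← Real.exp_add, sub_add_cancel]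

lemma integral_exp_collisionCount_sub_compensator_le_one (σ : ℝ) (n : ℕ) :
    ∫ ω, exp (σ * collisionCount ω - compensator μ (fun k ↦ exp (2 * σ * k) - 1) ω)
      ∂sampleLaw μ n ≤ 1 := by
  induction n with
  | zero => simp [collisionCount_zero, compensator]
  | succ n ih =>
    rw [integral_sampleLaw_succ .of_finite, integral_integral_swap .of_finite]
    exact (integral_mono .of_finite .of_finite
      (integral_exp_collisionCount_cons_le σ)).trans ih

end Compensator

section PowerSum

variable {α : Type*} [Fintype α] [MeasurableSpace α] {μ : Measure α} {n : ℕ}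

/-- The sum of the `k`-th powers of the masses of the atoms of `μ`; it is the collision probability
for `k = 2`. -/
noncomputable def powerSum (μ : Measure α) (k : ℕ) : ℝ := ∑ x, μ.real {x} ^ k

/-- The variance proxy `n⁴ v²` of the number of collisions, where `v² = Q / n² + P / n` with
`Q = powerSum μ 2` and `P = powerSum μ 3`. -/
noncomputable def varianceProxy (μ : Measure α) (n : ℕ) : ℝ :=
  n ^ 2 * powerSum μ 2 + n ^ 3 * powerSum μ 3

lemma powerSum_nonneg (k : ℕ) : 0 ≤ powerSum μ k :=
  sum_nonneg fun _ _ ↦ by positivity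

lemma sq_mul_powerSum_two_le_varianceProxy : n ^ 2 * powerSum μ 2 ≤ varianceProxy μ n :=
  le_add_of_nonneg_right (mul_nonneg (by positivity) (powerSum_nonneg 3))

variable [MeasurableSingletonClass α]

lemma integral_measureReal_singleton_pow [IsFiniteMeasure μ] (k : ℕ) :
    ∫ x, μ.real {x} ^ k ∂μ = powerSum μ (k + 1) := by
  simp only [integral_fintype .of_finite, smul_eq_mul, powerSum, pow_succ']

lemma integral_exp_compensator_natCast_le [DecidableEq α] [IsProbabilityMeasure μ] {κ : ℝ}
    (hκ : ∀ x, |κ| * (n * μ.real {x}) ≤ 1) :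
    ∫ ω, exp (κ * compensator μ (fun k ↦ (k : ℝ)) ω) ∂sampleLaw μ n ≤
      exp (κ * (n * (n - 1) / 2) * powerSum μ 2 + κ ^ 2 * n ^ 3 * powerSum μ 3) := by
  have bounded (i : Fin n) (x : α) : |κ * i * μ.real {x}| ≤ 1 := by
    have hi : (i : ℝ) ≤ n := by exact_mod_cast i.is_lt.le
    rw [abs_mul, abs_mul, Nat.abs_cast, abs_of_nonneg measureReal_nonneg, mul_assoc]
    exact le_trans (by gcongr) (hκ x)
  have sum_index : ∑ i : Fin n, (i : ℝ) = n * (n - 1) / 2 := by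
    rw [Fin.sum_univ_eq_sum_range (fun i ↦ (i : ℝ)), ← Nat.cast_sum, sum_range_id,
      ← Nat.choose_two_right, Nat.cast_choose_two]
  have sum_index_sq : ∑ i : Fin n, (i : ℝ) ^ 2 ≤ n ^ 3 := by
    calc ∑ i : Fin n, (i : ℝ) ^ 2 ≤ ∑ _i : Fin n, (n : ℝ) ^ 2 := by
          gcongr with i
          exact i.is_lt.le
      _ = n ^ 3 := by simp [pow_succ']
  calc ∫ ω, exp (κ * compensator μ (fun k ↦ (k : ℝ)) ω) ∂sampleLaw μ n
      = ∫ ω, exp (∑ i, κ * i * μ.real {ω i}) ∂sampleLaw μ n := by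
        simp only [compensator_natCast, mul_sum, mul_assoc]
    _ ≤ exp (∑ i : Fin n, (∫ x, κ * i * μ.real {x} ∂μ + ∫ x, (κ * i * μ.real {x}) ^ 2 ∂μ)) :=
        integral_exp_sum_le_of_abs_le_one (f := fun (i : Fin n) x ↦ κ * i * μ.real {x})
          (fun _ ↦ Integrable.of_finite.aestronglyMeasurable) bounded
    _ = exp (κ * (∑ i : Fin n, (i : ℝ)) * powerSum μ 2 +
          κ ^ 2 * (∑ i : Fin n, (i : ℝ) ^ 2) * powerSum μ 3) := by
        have first_moment := integral_measureReal_singleton_pow (μ := μ) 1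
        simp only [pow_one, Nat.reduceAdd] at first_moment
        simp only [mul_pow, integral_const_mul, integral_measureReal_singleton_pow, first_moment,
          sum_add_distrib, mul_sum, sum_mul, Nat.reduceAdd]
    _ ≤ _ := by
        rw [sum_index]
        have := powerSum_nonneg (μ := μ) 3
        gcongr

end PowerSum

section OccupancyMoments

variable {α : Type*} [Finite α] [DecidableEq α] [MeasurableSpace α] [MeasurableSingletonClass α]
  {μ : Measure α} [IsProbabilityMeasure μ] {n : ℕ}

lemma integral_comp_occupancy_succ (x : α) (g : ℕ → ℝ) :
    ∫ ω, g (occupancy ω x) ∂sampleLaw μ (n + 1) =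
      (1 - μ.real {x}) * ∫ ω, g (occupancy ω x) ∂sampleLaw μ n +
        μ.real {x} * ∫ ω, g (occupancy ω x + 1) ∂sampleLaw μ n := by
  set A := ∫ ω, g (occupancy ω x) ∂sampleLaw μ n
  set B := ∫ ω, g (occupancy ω x + 1) ∂sampleLaw μ n
  have first_sample (y : α) :
      ∫ ω, g (occupancy (Fin.cons y ω : Fin (n + 1) → α) x) ∂sampleLaw μ n =
        A + Set.indicator {x} (fun _ ↦ B - A) y := by
    by_cases hy : y = x <;> simp [occupancy_cons, hy, A, B]
  rw [integral_sampleLaw_succ .of_finite]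
  simp only [first_sample]
  rw [integral_add .of_finite .of_finite, integral_const, probReal_univ,
    integral_indicator_const _ (measurableSet_singleton x), smul_eq_mul, smul_eq_mul]
  ring

lemma choose_succ_mul_pow_sub {R : Type*} [Semiring R] (z : R) (n j : ℕ) :
    (n.choose (j + 1) : R) * (z * z ^ (n - (j + 1))) = n.choose (j + 1) * z ^ (n - j) := by
  rcases lt_or_ge j n with hj | hj
  · rw [← pow_succ', Nat.sub_add_eq, Nat.sub_add_cancel (Nat.sub_pos_of_lt hj)]
  · simp [Nat.choose_eq_zero_of_lt (Nat.lt_succ_of_le hj)]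

lemma integral_choose_occupancy_mul_pow (x : α) (y : ℝ) (n j : ℕ) :
    ∫ ω, ((occupancy ω x).choose j : ℝ) * y ^ occupancy ω x ∂sampleLaw μ n =
      n.choose j * (μ.real {x} * y) ^ j * (1 + μ.real {x} * (y - 1)) ^ (n - j) := by
  set p := μ.real {x}
  set z := 1 + p * (y - 1) with hz
  induction n generalizing j with
  | zero => cases j <;> simp [occupancy_zero]
  | succ n ih =>
    rw [integral_comp_occupancy_succ x fun k ↦ (k.choose j : ℝ) * y ^ k, ih]
    cases j with
    | zero =>
      have shift : ∫ ω, (((occupancy ω x + 1).choose 0 : ℕ) : ℝ) * y ^ (occupancy ω x + 1)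
          ∂sampleLaw μ n = y * z ^ n := by
        have pow_moment : ∫ ω, y ^ occupancy ω x ∂sampleLaw μ n = z ^ n := by simpa using ih 0
        rw [← pow_moment, ← integral_const_mul]
        simp only [Nat.choose_zero_right, Nat.cast_one, one_mul, pow_succ']
      rw [shift]
      simp only [Nat.choose_zero_right, Nat.cast_one, pow_zero, Nat.sub_zero, pow_succ]
      linear_combination (-z ^ n) * hz
    | succ j =>
      have pascal : ∫ ω, (((occupancy ω x + 1).choose (j + 1) : ℕ) : ℝ) * y ^ (occupancy ω x + 1)
          ∂sampleLaw μ n = y * (n.choose j * (p * y) ^ j * z ^ (n - j) +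
            n.choose (j + 1) * (p * y) ^ (j + 1) * z ^ (n - (j + 1))) := by
        rw [← ih, ← ih, ← integral_add .of_finite .of_finite, ← integral_const_mul]
        refine integral_congr_ae (.of_forall fun ω ↦ ?_)
        simp only [Nat.choose_succ_succ', Nat.cast_add, pow_succ]
        ring
      rw [pascal, Nat.choose_succ_succ', Nat.add_sub_add_right]
      push_cast
      linear_combination (p * y) ^ (j + 1) * choose_succ_mul_pow_sub z n j -
        n.choose (j + 1) * (p * y) ^ (j + 1) * z ^ (n - (j + 1)) * hz

lemma integral_choose_occupancy_mul_pow_le (x : α) {y : ℝ} (hy : 1 ≤ y) (n j : ℕ) :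
    ∫ ω, ((occupancy ω x).choose j : ℝ) * y ^ occupancy ω x ∂sampleLaw μ n ≤
      n.choose j * (μ.real {x} * y) ^ j * exp (n * μ.real {x} * (y - 1)) := by
  have growth_nonneg : 0 ≤ μ.real {x} * (y - 1) := mul_nonneg measureReal_nonneg (by linarith)
  rw [integral_choose_occupancy_mul_pow]
  gcongr
  calc (1 + μ.real {x} * (y - 1)) ^ (n - j) ≤ (1 + μ.real {x} * (y - 1)) ^ n :=
        pow_le_pow_right₀ (by linarith) (n.sub_le j)
    _ ≤ exp (μ.real {x} * (y - 1)) ^ n := by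
        gcongr
        linarith [Real.add_one_le_exp (μ.real {x} * (y - 1))]
    _ = exp (n * μ.real {x} * (y - 1)) := by rw [← Real.exp_nat_mul, mul_assoc]

lemma exp_two_le_eight : exp 2 ≤ 8 := by
  rw [show (2 : ℝ) = 1 + 1 by norm_num, Real.exp_add]
  nlinarith [Real.exp_one_lt_d9, Real.exp_pos 1]

lemma integral_occupancy_mul_exp_two_pow_le (x : α) :
    ∫ ω, occupancy ω x * exp 2 ^ occupancy ω x ∂sampleLaw μ n ≤
      8 * (n * μ.real {x}) * exp (8 * (n * μ.real {x})) := by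
  have h := integral_choose_occupancy_mul_pow_le (μ := μ) x (Real.one_le_exp zero_le_two) n 1
  simp only [Nat.choose_one_right, pow_one] at h
  calc _ ≤ n * (μ.real {x} * exp 2) * exp (n * μ.real {x} * (exp 2 - 1)) := h
    _ ≤ n * (μ.real {x} * 8) * exp (n * μ.real {x} * 8) := by
        gcongr
        · exact exp_two_le_eight
        · linarith [exp_two_le_eight]
    _ = _ := by ring_nf

lemma measureReal_lt_occupancy_le {x : α} {M : ℝ} (hM : 1 ≤ M) (hx : 4 * (n * μ.real {x}) ≤ M) :
    (sampleLaw μ n).real {ω | M < occupancy ω x} ≤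
      4 * (n * μ.real {x}) ^ 2 * exp (-(M / 2)) := by
  set p := μ.real {x}
  set f : (Fin n → α) → ℝ := fun ω ↦ ((occupancy ω x).choose 2 : ℝ) * exp 1 ^ occupancy ω x
  have subset : {ω : Fin n → α | M < occupancy ω x} ⊆ {ω | exp M ≤ f ω} := fun ω hω ↦ by
    have two_le : 2 ≤ occupancy ω x := by exact_mod_cast hM.trans_lt hω
    have one_le_choose : (1 : ℝ) ≤ (occupancy ω x).choose 2 := by
      exact_mod_cast Nat.choose_pos two_le
    calc exp M ≤ exp (occupancy ω x) := Real.exp_le_exp.2 (le_of_lt hω)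
      _ = exp 1 ^ occupancy ω x := by rw [← Real.exp_nat_mul, mul_one]
      _ ≤ f ω := le_mul_of_one_le_left (by positivity) one_le_choose
  have moment : ∫ ω, f ω ∂sampleLaw μ n ≤ 4 * (n * p) ^ 2 * exp (M / 2) := by
    have choose_le : (n.choose 2 : ℝ) ≤ n ^ 2 / 2 := by
      simpa using Nat.choose_le_pow_div (α := ℝ) 2 n
    have sq_exp_le : exp 1 ^ 2 ≤ 8 := by
      rw [← Real.exp_nat_mul, mul_one]
      exact exp_two_le_eight
    have exponent_le : n * p * (exp 1 - 1) ≤ M / 2 := by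
      have : n * p * (exp 1 - 1) ≤ n * p * 2 := by
        gcongr
        linarith [Real.exp_one_lt_three]
      linarith
    calc ∫ ω, f ω ∂sampleLaw μ n ≤ n.choose 2 * (p * exp 1) ^ 2 * exp (n * p * (exp 1 - 1)) :=
          integral_choose_occupancy_mul_pow_le x (Real.one_le_exp zero_le_one) n 2
      _ ≤ n ^ 2 / 2 * (p ^ 2 * 8) * exp (M / 2) := by rw [mul_pow]; gcongr
      _ = 4 * (n * p) ^ 2 * exp (M / 2) := by ring
  have markov : exp M * (sampleLaw μ n).real {ω | exp M ≤ f ω} ≤ ∫ ω, f ω ∂sampleLaw μ n :=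
    mul_meas_ge_le_integral_of_nonneg (.of_forall fun ω ↦ by positivity) .of_finite _
  refine (measureReal_mono subset).trans (le_of_mul_le_mul_left ?_ (Real.exp_pos M))
  calc exp M * (sampleLaw μ n).real {ω | exp M ≤ f ω}
      ≤ 4 * (n * p) ^ 2 * exp (M + -(M / 2)) := by
        rw [show M + -(M / 2) = M / 2 by ring]
        exact markov.trans moment
    _ = exp M * (4 * (n * p) ^ 2 * exp (-(M / 2))) := by rw [Real.exp_add]; ring

end OccupancyMoments

section NegativeAssociation

lemma prod_add_sum_mul_prod_erase_le_prod_add {ι R : Type*} [DecidableEq ι] [CommSemiring R]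
    [PartialOrder R] [IsOrderedRing R] (s : Finset ι) {f g : ι → R} (hf : ∀ i ∈ s, 0 ≤ f i)
    (hg : ∀ i ∈ s, 0 ≤ g i) :
    ∏ i ∈ s, f i + ∑ j ∈ s, g j * ∏ i ∈ s.erase j, f i ≤ ∏ i ∈ s, (f i + g i) := by
  induction s using Finset.induction_on with
  | empty => simp
  | insert a s ha ih =>
    rw [forall_mem_insert] at hf hg
    have erase_insert_prod : ∑ j ∈ s, g j * ∏ i ∈ (insert a s).erase j, f i =
        f a * ∑ j ∈ s, g j * ∏ i ∈ s.erase j, f i := by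
      rw [mul_sum]
      refine sum_congr rfl fun j hj ↦ ?_
      rw [erase_insert_of_ne (ne_of_mem_of_not_mem hj ha).symm,
        prod_insert fun h ↦ ha (mem_of_mem_erase h), mul_left_comm]
    have sum_nonneg : 0 ≤ ∑ j ∈ s, g j * ∏ i ∈ s.erase j, f i :=
      Finset.sum_nonneg fun j hj ↦
        mul_nonneg (hg.2 j hj) (prod_nonneg fun i hi ↦ hf.2 i (mem_of_mem_erase hi))
    rw [prod_insert ha, prod_insert ha, sum_insert ha, erase_insert ha, erase_insert_prod]
    calc f a * ∏ i ∈ s, f i +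
          (g a * ∏ i ∈ s, f i + f a * ∑ j ∈ s, g j * ∏ i ∈ s.erase j, f i)
        ≤ f a * ∏ i ∈ s, f i + (g a * ∏ i ∈ s, f i + f a * ∑ j ∈ s, g j * ∏ i ∈ s.erase j, f i) +
          g a * ∑ j ∈ s, g j * ∏ i ∈ s.erase j, f i :=
          le_add_of_nonneg_right (mul_nonneg hg.1 sum_nonneg)
      _ = (f a + g a) * (∏ i ∈ s, f i + ∑ j ∈ s, g j * ∏ i ∈ s.erase j, f i) := by ring
      _ ≤ _ := mul_le_mul_of_nonneg_left (ih hf.2 hg.2) (add_nonneg hf.1 hg.1)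

variable {α : Type*} [Fintype α] [DecidableEq α] [MeasurableSpace α] [MeasurableSingletonClass α]
  {μ : Measure α} [IsProbabilityMeasure μ] {n : ℕ}

/-- Negative association of the occupancies: the first sample `y` raises only the factor at `y`,
so the increments of two different factors never multiply. -/
lemma integral_prod_comp_occupancy_le {g : α → ℕ → ℝ} (hg : ∀ x, Monotone (g x))
    (hg0 : ∀ x k, 0 ≤ g x k) :
    ∫ ω, ∏ x, g x (occupancy ω x) ∂sampleLaw μ n ≤
      ∏ x, ∫ ω, g x (occupancy ω x) ∂sampleLaw μ n := by
  induction n generalizing g with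
  | zero => simp [integral_sampleLaw_zero]
  | succ n ih =>
    set A : α → ℝ := fun x ↦ ∫ ω, g x (occupancy ω x) ∂sampleLaw μ n
    set B : α → ℝ := fun x ↦ ∫ ω, g x (occupancy ω x + 1) ∂sampleLaw μ n
    have A_nonneg (x : α) : 0 ≤ A x := integral_nonneg fun ω ↦ hg0 x _
    have A_le_B (x : α) : A x ≤ B x :=
      integral_mono .of_finite .of_finite fun ω ↦ hg x (Nat.le_succ _)
    have first_sample (y : α) :
        ∫ ω, ∏ x, g x (occupancy (Fin.cons y ω : Fin (n + 1) → α) x) ∂sampleLaw μ n ≤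
          ∏ x, A x + (B y - A y) * ∏ x ∈ univ.erase y, A x := by
      simp only [occupancy_cons]
      refine (ih (g := fun x k ↦ g x (k + if y = x then 1 else 0))
        (fun x a b hab ↦ hg x (by gcongr)) (fun x k ↦ hg0 x _)).trans_eq ?_
      have off_diagonal : ∏ x ∈ univ.erase y,
          ∫ ω, g x (occupancy ω x + if y = x then 1 else 0) ∂sampleLaw μ n =
            ∏ x ∈ univ.erase y, A x :=
        prod_congr rfl fun x hx ↦ by simp [(ne_of_mem_erase hx).symm, A]
      rw [← mul_prod_erase _ _ (mem_univ y), ← mul_prod_erase _ A (mem_univ y), off_diagonal]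
      simp only [if_true, A, B]
      ring
    calc ∫ ω, ∏ x, g x (occupancy ω x) ∂sampleLaw μ (n + 1)
        ≤ ∫ y, (∏ x, A x + (B y - A y) * ∏ x ∈ univ.erase y, A x) ∂μ := by
          rw [integral_sampleLaw_succ .of_finite]
          exact integral_mono .of_finite .of_finite first_sample
      _ = ∏ x, A x + ∑ y, μ.real {y} * (B y - A y) * ∏ x ∈ univ.erase y, A x := by
          rw [integral_add .of_finite .of_finite, integral_const, probReal_univ, one_smul,
            integral_fintype .of_finite]
          simp only [smul_eq_mul, mul_assoc]
      _ ≤ ∏ x, (A x + μ.real {x} * (B x - A x)) :=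
          prod_add_sum_mul_prod_erase_le_prod_add _ (fun x _ ↦ A_nonneg x)
            fun x _ ↦ mul_nonneg measureReal_nonneg (sub_nonneg.2 (A_le_B x))
      _ = ∏ x, ∫ ω, g x (occupancy ω x) ∂sampleLaw μ (n + 1) := by
          simp only [integral_comp_occupancy_succ, A, B]
          exact prod_congr rfl fun x _ ↦ by ring

end NegativeAssociation

section QuadraticRemainder

/-- A version of the Huber function, meant for `0 ≤ u`: it is quadratic near `0`, as a second order
Taylor remainder is, but its linear growth keeps exponential moments under control. -/
noncomputable def clippedSquare (u : ℝ) : ℝ := min u (u ^ 2)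

lemma clippedSquare_mono {u v : ℝ} (hu : 0 ≤ u) (huv : u ≤ v) :
    clippedSquare u ≤ clippedSquare v :=
  min_le_min huv (pow_le_pow_left₀ hu huv 2)

lemma monotone_clippedSquare_mul_natCast {ϑ : ℝ} (hϑ : 0 ≤ ϑ) :
    Monotone fun k : ℕ ↦ clippedSquare (ϑ * k) :=
  fun a b hab ↦ clippedSquare_mono (by positivity) (by gcongr)

lemma exp_sub_one_le_add_clippedSquare_abs {u : ℝ} (hu : |u| ≤ 1) :
    exp u - 1 ≤ u + clippedSquare |u| := by
  have clipped_eq : clippedSquare |u| = u ^ 2 := by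
    rw [clippedSquare, min_eq_right (pow_le_of_le_one (abs_nonneg u) hu two_ne_zero), sq_abs]
  linarith [(abs_le.1 (Real.abs_exp_sub_one_sub_id_le hu)).2]

lemma exp_clippedSquare_le_of_lt {m ϑ k : ℝ} (hm : 0 ≤ m) (hϑm : ϑ * m ≤ 1 / 4)
    (hk : 8 * m < k) :
    exp (2 * (m * clippedSquare (ϑ * k))) ≤
      1 + 2 * m * ϑ ^ 2 * exp (-(8 * m)) * (k * exp (2 * k)) := by
  have hk0 : 0 ≤ k := by linarith
  set v := 2 * (m * clippedSquare (ϑ * k))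
  have v_le_quadratic : v ≤ 2 * m * ϑ ^ 2 * k ^ 2 := by
    calc v ≤ 2 * (m * (ϑ * k) ^ 2) := by
          dsimp only [v]
          gcongr
          exact min_le_right _ _
      _ = 2 * m * ϑ ^ 2 * k ^ 2 := by ring
  have v_le_linear : v ≤ k / 2 := by
    calc v ≤ 2 * (m * (ϑ * k)) := by
          dsimp only [v]
          gcongr
          exact min_le_left _ _
      _ = 2 * (ϑ * m * k) := by ring
      _ ≤ 2 * (1 / 4 * k) := by gcongr
      _ = k / 2 := by ring
  have exp_le : exp v ≤ 1 + v * exp v := by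
    have := mul_le_mul_of_nonneg_right (Real.add_one_le_exp (-v)) (Real.exp_pos v).le
    rw [← Real.exp_add, neg_add_cancel, Real.exp_zero] at this
    linarith
  have k_le_exp : k ≤ exp (k / 2) := by
    have := Real.quadratic_le_exp_of_nonneg (by positivity : 0 ≤ k / 2)
    nlinarith [sq_nonneg (k - 2)]
  calc exp v ≤ 1 + v * exp v := exp_le
    _ ≤ 1 + 2 * m * ϑ ^ 2 * k ^ 2 * exp (k / 2) := by gcongr
    _ = 1 + 2 * m * ϑ ^ 2 * (k * (k * exp (k / 2))) := by ring
    _ ≤ 1 + 2 * m * ϑ ^ 2 * (k * (exp (k / 2) * exp (k / 2))) := by gcongr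
    _ ≤ 1 + 2 * m * ϑ ^ 2 * (k * (exp (-(8 * m)) * exp (2 * k))) := by
        rw [← Real.exp_add, ← Real.exp_add]
        gcongr 1 + 2 * m * ϑ ^ 2 * (k * exp ?_)
        linarith
    _ = _ := by ring

/-- Occupancies up to `8m` are typical and contribute the first term; for the atypical ones, the
factor `exp (-8m)` will compensate the exponential moment of the occupancy. -/
lemma exp_clippedSquare_le {m ϑ : ℝ} (hm : 0 ≤ m) (hϑm : ϑ * m ≤ 1 / 4) (k : ℕ) :
    exp (2 * (m * clippedSquare (ϑ * k))) ≤
      exp (16 * ϑ ^ 2 * m ^ 2) ^ k + 2 * m * ϑ ^ 2 * exp (-(8 * m)) * (k * exp 2 ^ k) := by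
  rcases le_or_gt (k : ℝ) (8 * m) with hk | hk
  · refine le_add_of_le_of_nonneg ?_ (by positivity)
    rw [← Real.exp_nat_mul, Real.exp_le_exp]
    calc 2 * (m * clippedSquare (ϑ * k)) ≤ 2 * (m * (ϑ * k) ^ 2) := by
          gcongr
          exact min_le_right _ _
      _ = 2 * m * ϑ ^ 2 * k * k := by ring
      _ ≤ 2 * m * ϑ ^ 2 * k * (8 * m) := by gcongr
      _ = k * (16 * ϑ ^ 2 * m ^ 2) := by ring
  · refine (exp_clippedSquare_le_of_lt hm hϑm hk).trans ?_
    rw [← Real.exp_nat_mul 2 k, mul_comm (k : ℝ) 2]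
    gcongr
    exact one_le_pow₀ (Real.one_le_exp (by positivity))

variable {α : Type*} [DecidableEq α] [MeasurableSpace α] [MeasurableSingletonClass α]
  {μ : Measure α} [IsProbabilityMeasure μ] {n : ℕ} {ϑ : ℝ}

lemma integral_exp_clippedSquare_occupancy_le [Finite α] (hϑ : 0 ≤ ϑ) {x : α}
    (hϑx : ϑ * (n * μ.real {x}) ≤ 1 / 4) :
    ∫ ω, exp (2 * (n * μ.real {x} * clippedSquare (ϑ * occupancy ω x))) ∂sampleLaw μ n ≤
      exp (32 * ϑ ^ 2 * ((n * μ.real {x}) ^ 2 + (n * μ.real {x}) ^ 3)) := by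
  set m := n * μ.real {x}
  have hm : 0 ≤ m := by positivity
  set w := 16 * ϑ ^ 2 * m ^ 2 with hw_def
  have hw : 0 ≤ w := by positivity
  have exp_w_sub_one_le : exp w - 1 ≤ 2 * w := by
    have hw1 : w ≤ 1 := by nlinarith [mul_nonneg hϑ hm]
    have := (abs_le.1 (Real.abs_exp_sub_one_sub_id_le (abs_le.2 ⟨by linarith, hw1⟩))).2
    nlinarith
  have typical : ∫ ω, exp w ^ occupancy ω x ∂sampleLaw μ n ≤ exp (2 * w * m) := by
    have h := integral_choose_occupancy_mul_pow_le (μ := μ) x (Real.one_le_exp hw) n 0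
    simp only [Nat.choose_zero_right, Nat.cast_one, pow_zero, one_mul] at h
    refine h.trans (Real.exp_le_exp.2 ?_)
    rw [mul_comm (2 * w)]
    gcongr
  have atypical : ∫ ω, occupancy ω x * exp 2 ^ occupancy ω x ∂sampleLaw μ n ≤
      8 * m * exp (8 * m) := integral_occupancy_mul_exp_two_pow_le x
  calc _ ≤ ∫ ω, (exp w ^ occupancy ω x +
          2 * m * ϑ ^ 2 * exp (-(8 * m)) * (occupancy ω x * exp 2 ^ occupancy ω x))
            ∂sampleLaw μ n :=
        integral_mono .of_finite .of_finite fun ω ↦ exp_clippedSquare_le hm hϑx _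
    _ ≤ exp (2 * w * m) + 2 * m * ϑ ^ 2 * exp (-(8 * m)) * (8 * m * exp (8 * m)) := by
        rw [integral_add .of_finite .of_finite, integral_const_mul]
        gcongr
    _ = exp (2 * w * m) + w := by
        have exp_cancel : exp (-(8 * m)) * exp (8 * m) = 1 := by
          rw [← Real.exp_add, neg_add_cancel, Real.exp_zero]
        linear_combination 16 * m ^ 2 * ϑ ^ 2 * exp_cancel
    _ ≤ exp (2 * w * m) * exp (2 * w) := by
        nlinarith [Real.one_le_exp (show 0 ≤ 2 * w * m by positivity), Real.add_one_le_exp (2 * w)]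
    _ = _ := by rw [← Real.exp_add, hw_def]; ring_nf

lemma integral_exp_integral_clippedSquare_occupancy_le [Fintype α] (hϑ : 0 ≤ ϑ)
    (hϑμ : ∀ x, ϑ * (n * μ.real {x}) ≤ 1 / 4) :
    ∫ ω, exp (2 * (n * ∫ x, clippedSquare (ϑ * occupancy ω x) ∂μ)) ∂sampleLaw μ n ≤
      exp (32 * ϑ ^ 2 * varianceProxy μ n) := by
  set g : α → ℕ → ℝ := fun x k ↦ exp (2 * (n * μ.real {x} * clippedSquare (ϑ * k)))
  have g_mono (x : α) : Monotone (g x) := fun a b hab ↦ by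
    have := monotone_clippedSquare_mul_natCast hϑ hab
    dsimp only [g] at this ⊢
    gcongr
  calc ∫ ω, exp (2 * (n * ∫ x, clippedSquare (ϑ * occupancy ω x) ∂μ)) ∂sampleLaw μ n
      = ∫ ω, ∏ x, g x (occupancy ω x) ∂sampleLaw μ n := by
        simp only [g, integral_fintype .of_finite, mul_sum, Real.exp_sum, smul_eq_mul, mul_assoc]
    _ ≤ ∏ x, ∫ ω, g x (occupancy ω x) ∂sampleLaw μ n :=
        integral_prod_comp_occupancy_le g_mono fun _ _ ↦ (Real.exp_pos _).le
    _ ≤ ∏ x, exp (32 * ϑ ^ 2 * ((n * μ.real {x}) ^ 2 + (n * μ.real {x}) ^ 3)) :=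
        prod_le_prod (fun _ _ ↦ integral_nonneg fun _ ↦ (Real.exp_pos _).le)
          fun x _ ↦ integral_exp_clippedSquare_occupancy_le hϑ (hϑμ x)
    _ = exp (32 * ϑ ^ 2 * varianceProxy μ n) := by
        simp only [← Real.exp_sum, ← mul_sum, sum_add_distrib, mul_pow, varianceProxy, powerSum]

end QuadraticRemainder

section Tail

variable {α : Type*} [DecidableEq α] [MeasurableSpace α] [MeasurableSingletonClass α]
  {μ : Measure α} [IsProbabilityMeasure μ] {n : ℕ}

lemma compensator_exp_le_of_occupancy_le [Finite α] {t : ℝ} {ω : Fin n → α}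
    (hω : ∀ x, 4 * |t| * occupancy ω x ≤ 1) :
    compensator μ (fun k ↦ exp (2 * (2 * t) * k) - 1) ω ≤
      4 * t * compensator μ (fun k ↦ (k : ℝ)) ω +
        n * ∫ x, clippedSquare (4 * |t| * occupancy ω x) ∂μ := by
  have taylor (x : α) (k : ℕ) (hk : k ≤ occupancy ω x) :
      exp (2 * (2 * t) * k) - 1 ≤ 4 * t * k + clippedSquare (4 * |t| * k) := by
    have abs_eq : |4 * t * k| = 4 * |t| * k := by
      rw [abs_mul, abs_mul, Nat.abs_cast, abs_of_pos (four_pos (α := ℝ))]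
    have abs_le_one : |4 * t * k| ≤ 1 := by
      rw [abs_eq]
      exact le_trans (by gcongr) (hω x)
    rw [← abs_eq, show 2 * (2 * t) * k = 4 * t * k by ring]
    exact exp_sub_one_le_add_clippedSquare_abs abs_le_one
  refine (compensator_mono taylor).trans ?_
  rw [compensator_mul_add]
  gcongr
  exact compensator_le_of_monotone (monotone_clippedSquare_mul_natCast (by positivity)) ω

variable [Fintype α]

/-- The exponent is an average of the supermartingale exponent (with weight `1/2`), its linear part
and its quadratic remainder (with weights `1/4`), each with exponential moment at most one. -/
lemma integral_exp_collisionCount_sub_le_one {t : ℝ} (ht : ∀ x, 16 * |t| * (n * μ.real {x}) ≤ 1) :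
    ∫ ω, exp (t * (collisionCount ω - n * (n - 1) * powerSum μ 2) -
      144 * t ^ 2 * varianceProxy μ n -
      (compensator μ (fun k ↦ exp (2 * (2 * t) * k) - 1) ω -
        (4 * t * compensator μ (fun k ↦ (k : ℝ)) ω +
          n * ∫ x, clippedSquare (4 * |t| * occupancy ω x) ∂μ)) / 2) ∂sampleLaw μ n ≤ 1 := by
  have m_nonneg (x : α) : 0 ≤ |t| * (n * μ.real {x}) := by positivity
  set φ : ℕ → ℝ := fun k ↦ exp (2 * (2 * t) * k) - 1
  set L : (Fin n → α) → ℝ := compensator μ fun k ↦ (k : ℝ)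
  set R : (Fin n → α) → ℝ := fun ω ↦ n * ∫ x, clippedSquare (4 * |t| * occupancy ω x) ∂μ
  set V := varianceProxy μ n
  set martingalePart : (Fin n → α) → ℝ := fun ω ↦ 2 * t * collisionCount ω - compensator μ φ ω
  set linearPart : (Fin n → α) → ℝ := fun ω ↦ 8 * t * L ω -
    (8 * t * (n * (n - 1) / 2) * powerSum μ 2 + (8 * t) ^ 2 * n ^ 3 * powerSum μ 3)
  set remainder : (Fin n → α) → ℝ := fun ω ↦ 2 * R ω - 32 * (4 * |t|) ^ 2 * V
  have martingale_moment : ∫ ω, exp (martingalePart ω) ∂sampleLaw μ n ≤ 1 :=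
    integral_exp_collisionCount_sub_compensator_le_one (2 * t) n
  have linear_moment : ∫ ω, exp (linearPart ω) ∂sampleLaw μ n ≤ 1 :=
    integral_exp_sub_const_le_one_iff.2 <| integral_exp_compensator_natCast_le fun x ↦ by
      rw [abs_mul, abs_of_pos (by norm_num : (0 : ℝ) < 8)]
      linarith [ht x, m_nonneg x]
  have remainder_moment : ∫ ω, exp (remainder ω) ∂sampleLaw μ n ≤ 1 :=
    integral_exp_sub_const_le_one_iff.2 <| integral_exp_integral_clippedSquare_occupancy_le
      (by positivity) fun x ↦ by linarith [ht x]
  refine le_trans (integral_mono .of_finite .of_finite fun ω ↦ Real.exp_le_exp.2 ?_)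
    (integral_exp_midpoint_le_one .of_finite .of_finite martingale_moment
      (integral_exp_midpoint_le_one .of_finite .of_finite linear_moment remainder_moment))
  have cubic_le : t ^ 2 * (n ^ 3 * powerSum μ 3) ≤ t ^ 2 * V := by
    gcongr
    exact le_add_of_nonneg_left (mul_nonneg (by positivity) (powerSum_nonneg 2))
  simp only [martingalePart, linearPart, remainder, R, mul_pow, sq_abs]
  linarith

lemma measureReal_forall_occupancy_le_and_le_le {t : ℝ}
    (ht : ∀ x, 16 * |t| * (n * μ.real {x}) ≤ 1) (u : ℝ) :
    (sampleLaw μ n).real {ω | (∀ x, 4 * |t| * occupancy ω x ≤ 1) ∧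
      u ≤ t * (collisionCount ω - n * (n - 1) * powerSum μ 2) - 144 * t ^ 2 * varianceProxy μ n} ≤
        exp (-u) := by
  have moment := integral_exp_collisionCount_sub_le_one ht
  set X : (Fin n → α) → ℝ := fun ω ↦
    t * (collisionCount ω - n * (n - 1) * powerSum μ 2) - 144 * t ^ 2 * varianceProxy μ n -
      (compensator μ (fun k ↦ exp (2 * (2 * t) * k) - 1) ω -
        (4 * t * compensator μ (fun k ↦ (k : ℝ)) ω +
          n * ∫ x, clippedSquare (4 * |t| * occupancy ω x) ∂μ)) / 2
  have subset : {ω : Fin n → α | (∀ x, 4 * |t| * occupancy ω x ≤ 1) ∧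
      u ≤ t * (collisionCount ω - n * (n - 1) * powerSum μ 2) - 144 * t ^ 2 * varianceProxy μ n} ⊆
        {ω | u ≤ X ω} := fun ω ⟨light, hu⟩ ↦ by
    have := compensator_exp_le_of_occupancy_le (μ := μ) light
    simp only [Set.mem_ofPred_eq, X]
    linarith
  calc _ ≤ (sampleLaw μ n).real {ω | u ≤ X ω} := measureReal_mono subset
    _ ≤ exp (-1 * u) * mgf X (sampleLaw μ n) 1 :=
        measure_ge_le_exp_mul_mgf u zero_le_one .of_finite
    _ ≤ exp (-u) := by
        simp only [mgf, one_mul, neg_mul]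
        exact mul_le_of_le_one_right (Real.exp_pos _).le moment

lemma measureReal_exists_lt_occupancy_le {M : ℝ} (hM : 1 ≤ M)
    (hμ : ∀ x, 4 * (n * μ.real {x}) ≤ M) :
    (sampleLaw μ n).real {ω | ∃ x, M < occupancy ω x} ≤
      4 * (n ^ 2 * powerSum μ 2) * exp (-(M / 2)) := by
  calc _ ≤ ∑ x, (sampleLaw μ n).real {ω | M < occupancy ω x} := by
        rw [Set.ofPred_exists]
        exact measureReal_iUnion_fintype_le _
    _ ≤ ∑ x, 4 * (n * μ.real {x}) ^ 2 * exp (-(M / 2)) :=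
        sum_le_sum fun x _ ↦ measureReal_lt_occupancy_le hM (hμ x)
    _ = 4 * (n ^ 2 * powerSum μ 2) * exp (-(M / 2)) := by
        simp only [powerSum, mul_sum, sum_mul, mul_pow]

end Tail

section Estimator

variable {α : Type} [DecidableEq α] {n : ℕ} {ε : ℝ}

lemma half_sq_mul_lt_abs_collisionCount_sub (hn : 2 ≤ n) (hε : 0 ≤ ε) {q : ℝ} {ω : Fin n → α}
    (h : ε < |collEst n ω - q|) :
    n ^ 2 * ε / 2 < |collisionCount ω - n * (n - 1) * q| := by
  have hn' : (2 : ℝ) ≤ n := by exact_mod_cast hn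
  have pairs_pos : (0 : ℝ) < n * (n - 1) := by nlinarith
  have unnormalize : collisionCount ω - n * (n - 1) * q = n * (n - 1) * (collEst n ω - q) := by
    rw [mul_sub (n * (n - 1) : ℝ)]
    exact congrArg (· - _) (mul_div_cancel₀ (collisionCount ω : ℝ) pairs_pos.ne').symm
  rw [unnormalize, abs_mul, abs_of_pos pairs_pos]
  calc n ^ 2 * ε / 2 = n ^ 2 / 2 * ε := by ring
    _ ≤ n * (n - 1) * ε := by
        gcongr
        nlinarith
    _ < _ := by gcongr

variable [Fintype α] [MeasurableSpace α] [MeasurableSingletonClass α]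
  {μ : Measure α} [IsProbabilityMeasure μ]

lemma measureReal_lt_abs_collEst_sub_le_add {t : ℝ} (hn : 2 ≤ n) (hε : 0 ≤ ε) (ht : 0 < t)
    (ht4 : t ≤ 1 / 4) (htμ : ∀ x, 16 * t * (n * μ.real {x}) ≤ 1) :
    (sampleLaw μ n).real {ω | ε < |collEst n ω - powerSum μ 2|} ≤
      2 * exp (144 * t ^ 2 * varianceProxy μ n - t * (n ^ 2 * ε / 2)) +
        4 * (n ^ 2 * powerSum μ 2) * exp (-(1 / (4 * t) / 2)) := by
  set V := varianceProxy μ n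
  set M := 1 / (4 * t)
  have light_iff (k : ℝ) : 4 * t * k ≤ 1 ↔ k ≤ M := by rw [le_div_iff₀' (by positivity)]
  have one_le_M : 1 ≤ M := (light_iff 1).1 (by linarith)
  let lightTail (s : ℝ) : Set (Fin n → α) := {ω | (∀ x, 4 * |s| * occupancy ω x ≤ 1) ∧
    t * (n ^ 2 * ε / 2) - 144 * t ^ 2 * V ≤
      s * (collisionCount ω - n * (n - 1) * powerSum μ 2) - 144 * s ^ 2 * V}
  let heavy : Set (Fin n → α) := {ω | ∃ x, M < occupancy ω x}
  have light_le {s : ℝ} (hs : |s| = t) : (sampleLaw μ n).real (lightTail s) ≤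
      exp (144 * t ^ 2 * V - t * (n ^ 2 * ε / 2)) := by
    refine (measureReal_forall_occupancy_le_and_le_le (hs ▸ htμ) _).trans_eq ?_
    rw [neg_sub]
  have heavy_le : (sampleLaw μ n).real heavy ≤ 4 * (n ^ 2 * powerSum μ 2) * exp (-(M / 2)) :=
    measureReal_exists_lt_occupancy_le one_le_M fun x ↦ (light_iff _).1 (by linarith [htμ x])
  have subset : {ω | ε < |collEst n ω - powerSum μ 2|} ⊆
      lightTail t ∪ lightTail (-t) ∪ heavy := fun ω hω ↦ by
    by_cases light : ∀ x, (occupancy ω x : ℝ) ≤ M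
    · have light' (x : α) : 4 * t * occupancy ω x ≤ 1 := (light_iff _).2 (light x)
      have deviation := half_sq_mul_lt_abs_collisionCount_sub hn hε hω
      refine .inl ((lt_abs.1 deviation).imp (fun h ↦ ⟨?_, ?_⟩) fun h ↦ ⟨?_, ?_⟩)
      · rwa [abs_of_pos ht]
      · gcongr
      · rwa [abs_neg, abs_of_pos ht]
      · rw [neg_sq, neg_mul_comm]
        gcongr
    · exact .inr (by simpa [heavy] using light)
  calc _ ≤ (sampleLaw μ n).real (lightTail t ∪ lightTail (-t) ∪ heavy) := measureReal_mono subset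
    _ ≤ (sampleLaw μ n).real (lightTail t) + (sampleLaw μ n).real (lightTail (-t)) +
          (sampleLaw μ n).real heavy :=
        (measureReal_union_le _ _).trans (add_le_add_left (measureReal_union_le _ _) _)
    _ ≤ _ := by
        linarith [light_le (abs_of_pos ht), light_le ((abs_neg t).trans (abs_of_pos ht)), heavy_le]

lemma sq_mul_sub_mul_half_le {m V D : ℝ} (hm : 0 ≤ m) (hD : 0 < D) (hV : m * V ≤ D ^ 2) :
    144 * (m / (576 * D)) ^ 2 * V - m / (576 * D) * (D / 2) ≤ -(1 / 2304) * m := by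
  calc _ = 144 * m * (m * V) / (576 * D) ^ 2 - m / 1152 := by field_simp; ring
    _ ≤ 144 * m * D ^ 2 / (576 * D) ^ 2 - m / 1152 := by gcongr
    _ = -(1 / 2304) * m := by field_simp; ring

lemma four_mul_mul_exp_le_of_le_cube {q r : ℝ} (hr : 0 ≤ r) (hq : q ≤ r ^ 3) :
    4 * q * exp (-(72 * r)) ≤ exp (-r) := by
  have four_mul_le : 4 * q ≤ exp (71 * r) := by
    have := Real.pow_div_factorial_le_exp (71 * r) (by positivity) 3
    norm_num [Nat.factorial, mul_pow] at this
    linarith [pow_nonneg hr 3]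
  calc 4 * q * exp (-(72 * r)) ≤ exp (71 * r) * exp (-(72 * r)) := by gcongr
    _ = exp (-r) := by rw [← Real.exp_add]; ring_nf

/-- The proof takes `t = m / (576 D)`, where `D = n² ε` is the scale of the deviation of the
collision count: for `m = D² / V` this is, up to a constant factor, the minimizer of the exponent
`144 t² V - t D / 2`, and the other two bounds on `m` keep `t` admissible. -/
lemma measureReal_lt_abs_collEst_sub_le_of_mul_varianceProxy_le {m : ℝ} (hn : 2 ≤ n) (hε : 0 ≤ ε)
    (hm1 : 1 ≤ m) (hm_var : m * varianceProxy μ n ≤ (n ^ 2 * ε) ^ 2)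
    (hm_max : ∀ x, m * (n * μ.real {x}) ≤ n ^ 2 * ε) (hm_sq : m ^ 2 ≤ n ^ 2 * ε) :
    (sampleLaw μ n).real {ω | ε < |collEst n ω - powerSum μ 2|} ≤ 3 * exp (-(1 / 2304) * m) := by
  have hm0 : 0 < m := by linarith
  set D := n ^ 2 * ε
  have hD0 : 0 < D := (by positivity : 0 < m ^ 2).trans_le hm_sq
  set t := m / (576 * D) with ht
  have m_le : m ≤ D / m := by rwa [le_div_iff₀ hm0, ← sq]
  have t_le : t ≤ 1 / 4 := by
    rw [ht, div_le_iff₀ (by positivity)]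
    nlinarith
  have t_mul_mass_le (x : α) : 16 * t * (n * μ.real {x}) ≤ 1 := by
    calc 16 * t * (n * μ.real {x}) = 16 * (m * (n * μ.real {x})) / (576 * D) := by rw [ht]; ring
      _ ≤ 16 * D / (576 * D) := by gcongr; exact hm_max x
      _ ≤ 1 := by rw [div_le_one (by positivity)]; linarith
  have truncation_eq : 1 / (4 * t) / 2 = 72 * (D / m) := by
    rw [ht]
    field_simp
    norm_num
  have heavy_mass : n ^ 2 * powerSum μ 2 ≤ (D / m) ^ 3 := by
    calc n ^ 2 * powerSum μ 2 ≤ varianceProxy μ n := sq_mul_powerSum_two_le_varianceProxy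
      _ ≤ D ^ 2 / m := by rwa [le_div_iff₀' hm0]
      _ = m * (D / m) ^ 2 := by field_simp
      _ ≤ (D / m) ^ 3 := by rw [pow_succ' _ 2]; gcongr
  calc _ ≤ 2 * exp (144 * t ^ 2 * varianceProxy μ n - t * (D / 2)) +
          4 * (n ^ 2 * powerSum μ 2) * exp (-(72 * (D / m))) :=
        truncation_eq ▸ measureReal_lt_abs_collEst_sub_le_add hn hε (by positivity) t_le
          t_mul_mass_le
    _ ≤ 2 * exp (-(1 / 2304) * m) + exp (-(D / m)) := by
        gcongr
        · exact sq_mul_sub_mul_half_le hm0.le hD0 hm_var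
        · exact four_mul_mul_exp_le_of_le_cube (by positivity) heavy_mass
    _ ≤ 2 * exp (-(1 / 2304) * m) + exp (-(1 / 2304) * m) := by
        gcongr
        linarith
    _ = 3 * exp (-(1 / 2304) * m) := by ring

lemma measureReal_lt_abs_collEst_sub_le {m : ℝ} (hn : 2 ≤ n) (hε : 0 ≤ ε)
    (hm_var : m * (powerSum μ 2 / n ^ 2 + powerSum μ 3 / n) ≤ ε ^ 2)
    (hm_max : ∀ x, m * (μ.real {x} / n) ≤ ε) (hm_sqrt : m ≤ n * √ε) :
    (sampleLaw μ n).real {ω | ε < |collEst n ω - powerSum μ 2|} ≤ 3 * exp (-(1 / 2304) * m) := by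
  rcases lt_or_ge m 1 with hm1 | hm1
  · exact measureReal_le_one.trans (by linarith [Real.add_one_le_exp (-(1 / 2304) * m)])
  have hn0 : (0 : ℝ) < n := by exact_mod_cast zero_lt_two.trans_le hn
  refine measureReal_lt_abs_collEst_sub_le_of_mul_varianceProxy_le hn hε hm1 ?_ (fun x ↦ ?_) ?_
  · calc m * varianceProxy μ n = n ^ 4 * (m * (powerSum μ 2 / n ^ 2 + powerSum μ 3 / n)) := by
          rw [varianceProxy]
          field_simp [hn0.ne']
      _ ≤ n ^ 4 * ε ^ 2 := by gcongr
      _ = (n ^ 2 * ε) ^ 2 := by ring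
  · calc m * (n * μ.real {x}) = n ^ 2 * (m * (μ.real {x} / n)) := by field_simp [hn0.ne']
      _ ≤ n ^ 2 * ε := by gcongr; exact hm_max x
  · calc m ^ 2 ≤ (n * √ε) ^ 2 := by gcongr
      _ = n ^ 2 * ε := by rw [mul_pow, Real.sq_sqrt hε]

end Estimator

end CollisionEstimator

/-- Tails of the collision estimator (Theorem 1). -/
theorem collision_estimator_tails :
    ∃ C c : ℝ, 0 < C ∧ 0 < c ∧
      ∀ (α : Type) [Fintype α] [DecidableEq α] [MeasurableSpace α] [MeasurableSingletonClass α]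
        (p : α → ℝ), (∀ x, 0 ≤ p x) → (∑ x, p x = 1) →
      ∀ (μ : Measure α) [IsProbabilityMeasure μ], (∀ x, μ {x} = ENNReal.ofReal (p x)) →
      ∀ (n : ℕ), 2 ≤ n → ∀ ε : ℝ, 0 < ε →
        (Measure.pi fun _ : Fin n => μ)
            {ω : Fin n → α | ε < |collEst n ω - ∑ x, (p x) ^ 2|}
          ≤ ENNReal.ofReal (C * Real.exp (-c *
              min (ε ^ 2 / ((∑ x, (p x) ^ 2) / (n : ℝ) ^ 2 + (∑ x, (p x) ^ 3) / (n : ℝ)))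
                (min (ε / ((⨆ x, p x) / (n : ℝ))) ((n : ℝ) * Real.sqrt ε)))) := by
  refine ⟨3, 1 / 2304, by norm_num, by norm_num, ?_⟩
  intro α _ _ _ _ p hp _ μ _ hμ n hn ε hε
  obtain rfl : p = fun x ↦ μ.real {x} := funext fun x ↦ by
    rw [measureReal_def, hμ, ENNReal.toReal_ofReal (hp x)]
  rw [← ofReal_measureReal]
  refine ENNReal.ofReal_le_ofReal
    (CollisionEstimator.measureReal_lt_abs_collEst_sub_le hn hε.le ?_ (fun x ↦ ?_) ?_)
  · refine mul_le_of_le_div₀ (sq_nonneg ε) ?_ (min_le_left _ _)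
    unfold CollisionEstimator.powerSum
    positivity
  · set B := ⨆ x, μ.real {x}
    have le_max : μ.real {x} ≤ B :=
      le_ciSup (f := fun y ↦ μ.real {y}) (Set.finite_range _).bddAbove x
    have max_nonneg : 0 ≤ B := measureReal_nonneg.trans le_max
    exact (mul_le_mul_of_nonneg_left (by gcongr) (by positivity)).trans
      (mul_le_of_le_div₀ hε.le (by positivity) ((min_le_right _ _).trans (min_le_left _ _)))
  · exact (min_le_right _ _).trans (min_le_right _ _)
end

section
/- There exist universal constants C, c > 0 such that for every finite type α, every probability mass function p on α, every integer n ≥ 2, and every ε with 0 < ε < 1, P[|Q̃ − Q| > ε·Q] ≤ C · exp(−c · n · ε² · √Q). -/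
open MeasureTheory ProbabilityTheory Finset

/-!
With `Q` the collision probability and `m = n √Q`, the number of collisions `∑ x, N_x (N_x - 1)`,
where `N_x` counts the occurrences of `x`, has mean `n (n - 1) Q ≈ m ^ 2`, and the claim is a
deviation bound with exponent of order `ε ^ 2 m`. A heavy value makes a single sample point
responsible for many collisions, so the increments of the count are truncated at `K = 4 m`. Divided
by `2 K`, the truncated count is `(2, 0)`-self-bounding with mean of order `m`, and the entropy
method (subadditivity of entropy, then Herbst's argument) gives it Bernstein tails at scale `m`.
Truncation only matters if some `N_x` exceeds `K + 1`; since the mean `n p_x` of `N_x` is at most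
`m`, an exponential moment shows that this has probability at most `exp (-m)` and hardly changes the
mean. For `ε ^ 2 m < 4` the claimed bound exceeds one.
-/

section BoundedMeasurable

variable {Ω Ω' : Type*} [MeasurableSpace Ω] [MeasurableSpace Ω']

/-- Bounded measurable real functions. The bound holds everywhere, not just almost everywhere, so
that it survives passing to the slices of a function on a product. -/
structure BddMeasurable (f : Ω → ℝ) : Prop where
  measurable : Measurable f
  exists_bound : ∃ C, ∀ x, |f x| ≤ C

namespace BddMeasurable

variable {f g : Ω → ℝ}

lemma of_finite [Finite Ω] [MeasurableSingletonClass Ω] (f : Ω → ℝ) : BddMeasurable f where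
  measurable := measurable_of_finite f
  exists_bound := by
    obtain ⟨C, hC⟩ := Set.finite_range (fun x ↦ |f x|) |>.bddAbove
    exact ⟨C, fun x ↦ hC ⟨x, rfl⟩⟩

lemma const (c : ℝ) : BddMeasurable fun _ : Ω ↦ c := ⟨measurable_const, |c|, fun _ ↦ le_rfl⟩

lemma comp (hf : BddMeasurable f) {φ : Ω' → Ω} (hφ : Measurable φ) :
    BddMeasurable fun x ↦ f (φ x) :=
  ⟨hf.measurable.comp hφ, hf.exists_bound.imp fun _ hC x ↦ hC (φ x)⟩

lemma continuous_comp₂ (hf : BddMeasurable f) (hg : BddMeasurable g) {φ : ℝ → ℝ → ℝ}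
    (hφ : Continuous φ.uncurry) : BddMeasurable fun x ↦ φ (f x) (g x) := by
  obtain ⟨C, hC⟩ := hf.exists_bound
  obtain ⟨D, hD⟩ := hg.exists_bound
  obtain ⟨B, hB⟩ := (isCompact_Icc.prod isCompact_Icc).exists_bound_of_continuousOn
    (s := Set.Icc (-C) C ×ˢ Set.Icc (-D) D) hφ.continuousOn
  exact ⟨hφ.measurable.comp (hf.measurable.prodMk hg.measurable), B,
    fun x ↦ hB (f x, g x) ⟨abs_le.1 (hC x), abs_le.1 (hD x)⟩⟩

lemma add (hf : BddMeasurable f) (hg : BddMeasurable g) : BddMeasurable fun x ↦ f x + g x :=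
  hf.continuous_comp₂ hg (φ := fun u v ↦ u + v) (by fun_prop)

lemma sub (hf : BddMeasurable f) (hg : BddMeasurable g) : BddMeasurable fun x ↦ f x - g x :=
  hf.continuous_comp₂ hg (φ := fun u v ↦ u - v) (by fun_prop)

lemma mul (hf : BddMeasurable f) (hg : BddMeasurable g) : BddMeasurable fun x ↦ f x * g x :=
  hf.continuous_comp₂ hg (φ := fun u v ↦ u * v) (by fun_prop)

lemma const_mul (hf : BddMeasurable f) (c : ℝ) : BddMeasurable fun x ↦ c * f x :=
  (const c).mul hf

lemma exp (hf : BddMeasurable f) : BddMeasurable fun x ↦ Real.exp (f x) :=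
  hf.continuous_comp₂ hf (φ := fun u _ ↦ Real.exp u) (by fun_prop)

lemma integrable (hf : BddMeasurable f) (μ : Measure Ω) [IsFiniteMeasure μ] : Integrable f μ := by
  obtain ⟨C, hC⟩ := hf.exists_bound
  exact Integrable.of_bound hf.measurable.aestronglyMeasurable C (.of_forall hC)

lemma integral_prod_right {f : Ω × Ω' → ℝ} (hf : BddMeasurable f) (ν : Measure Ω')
    [IsProbabilityMeasure ν] : BddMeasurable fun x ↦ ∫ y, f (x, y) ∂ν where
  measurable := hf.measurable.stronglyMeasurable.integral_prod_right'.measurable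
  exists_bound := by
    obtain ⟨C, hC⟩ := hf.exists_bound
    refine ⟨C, fun x ↦ ?_⟩
    simpa using norm_integral_le_of_norm_le_const (μ := ν) (f := fun y ↦ f (x, y))
      (.of_forall fun y ↦ hC (x, y))

end BddMeasurable

end BoundedMeasurable

section Entropy

variable {Ω Ω' : Type*} [MeasurableSpace Ω] [MeasurableSpace Ω'] {g h : Ω → ℝ}

/-- The pointwise relative entropy `u log (u / v) - u + v` of `u = exp a` with respect to
`v = exp b`; in this parametrization no logarithm occurs. -/
noncomputable def expRelEntropy (a b : ℝ) : ℝ := Real.exp a * (a - b) - Real.exp a + Real.exp b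

/-- The free energy `log 𝔼[exp g]`. -/
noncomputable def freeEnergy (μ : Measure Ω) (g : Ω → ℝ) : ℝ := Real.log (∫ x, Real.exp (g x) ∂μ)

/-- The entropy `𝔼[Z log Z] - 𝔼[Z] log 𝔼[Z]` of the positive random variable `Z = exp g`. -/
noncomputable def expEntropy (μ : Measure Ω) (g : Ω → ℝ) : ℝ :=
  ∫ x, Real.exp (g x) * g x ∂μ - Real.exp (freeEnergy μ g) * freeEnergy μ g

lemma expRelEntropy_nonneg (a b : ℝ) : 0 ≤ expRelEntropy a b := by
  have tangent : b - a + 1 ≤ Real.exp (b - a) := Real.add_one_le_exp _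
  have := mul_le_mul_of_nonneg_left tangent (Real.exp_pos a).le
  rw [← Real.exp_add, add_sub_cancel] at this
  unfold expRelEntropy
  linarith

lemma BddMeasurable.expRelEntropy (hg : BddMeasurable g) (hh : BddMeasurable h) :
    BddMeasurable fun x ↦ expRelEntropy (g x) (h x) :=
  ((hg.exp.mul (hg.sub hh)).sub hg.exp).add hh.exp

lemma exp_freeEnergy (μ : Measure Ω) [IsProbabilityMeasure μ] (hg : BddMeasurable g) :
    Real.exp (freeEnergy μ g) = ∫ x, Real.exp (g x) ∂μ :=
  Real.exp_log (integral_exp_pos (hg.exp.integrable μ))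

lemma BddMeasurable.freeEnergy_prod_right {g : Ω × Ω' → ℝ} (hg : BddMeasurable g) (ν : Measure Ω')
    [IsProbabilityMeasure ν] : BddMeasurable fun x ↦ freeEnergy ν fun y ↦ g (x, y) where
  measurable := (hg.exp.integral_prod_right ν).measurable.log
  exists_bound := by
    obtain ⟨C, hC⟩ := hg.exists_bound
    have slice (x : Ω) : BddMeasurable fun y ↦ g (x, y) := hg.comp measurable_prodMk_left
    refine ⟨C, fun x ↦ abs_le.2 ⟨?_, ?_⟩⟩
    · rw [← Real.exp_le_exp, exp_freeEnergy ν (slice x)]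
      simpa using integral_mono (integrable_const _) ((slice x).exp.integrable ν)
        fun y ↦ Real.exp_le_exp.2 (abs_le.1 (hC (x, y))).1
    · rw [← Real.exp_le_exp, exp_freeEnergy ν (slice x)]
      simpa using integral_mono ((slice x).exp.integrable ν) (integrable_const _)
        fun y ↦ Real.exp_le_exp.2 (abs_le.1 (hC (x, y))).2

lemma BddMeasurable.expEntropy_prod_right {g : Ω × Ω' → ℝ} (hg : BddMeasurable g) (ν : Measure Ω')
    [IsProbabilityMeasure ν] : BddMeasurable fun x ↦ expEntropy ν fun y ↦ g (x, y) :=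
  have hF := hg.freeEnergy_prod_right ν
  ((hg.exp.mul hg).integral_prod_right ν).sub (hF.exp.mul hF)

lemma integral_expRelEntropy_const (μ : Measure Ω) [IsProbabilityMeasure μ] (hg : BddMeasurable g)
    (c : ℝ) :
    ∫ x, expRelEntropy (g x) c ∂μ = expEntropy μ g + expRelEntropy (freeEnergy μ g) c := by
  have expand (x : Ω) : expRelEntropy (g x) c =
      Real.exp (g x) * g x - (c + 1) * Real.exp (g x) + Real.exp c := by
    unfold expRelEntropy; ring
  have hgi := hg.exp.mul hg
  have hei := hg.exp.const_mul (c + 1)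
  simp_rw [expand]
  rw [integral_add ((hgi.sub hei).integrable μ) (integrable_const _),
    integral_sub (hgi.integrable μ) (hei.integrable μ), integral_const_mul, ← exp_freeEnergy μ hg]
  simp only [expEntropy, expRelEntropy, integral_const, probReal_univ, one_smul]
  ring

lemma expEntropy_le_integral_expRelEntropy_const (μ : Measure Ω) [IsProbabilityMeasure μ]
    (hg : BddMeasurable g) (c : ℝ) : expEntropy μ g ≤ ∫ x, expRelEntropy (g x) c ∂μ := by
  rw [integral_expRelEntropy_const μ hg]
  exact le_add_of_nonneg_right (expRelEntropy_nonneg _ c)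

-- Jensen's inequality for the jointly convex function `(u, v) ↦ u log (u / v) - u + v`.
lemma expRelEntropy_freeEnergy_le (μ : Measure Ω) [IsProbabilityMeasure μ]
    (hg : BddMeasurable g) (hh : BddMeasurable h) :
    expRelEntropy (freeEnergy μ g) (freeEnergy μ h) ≤ ∫ x, expRelEntropy (g x) (h x) ∂μ := by
  set d := freeEnergy μ g - freeEnergy μ h with hd
  have supporting (x : Ω) :
      Real.exp (g x) * d + Real.exp (h x) * (1 - Real.exp d) ≤ expRelEntropy (g x) (h x) := by
    have := expRelEntropy_nonneg (g x) (h x + d)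
    unfold expRelEntropy at this ⊢
    rw [Real.exp_add] at this
    linarith
  have exp_shift : Real.exp (freeEnergy μ h) * Real.exp d = Real.exp (freeEnergy μ g) := by
    rw [← Real.exp_add, hd, add_sub_cancel]
  have hgi := (hg.exp.integrable μ).mul_const d
  have hhi := (hh.exp.integrable μ).mul_const (1 - Real.exp d)
  calc expRelEntropy (freeEnergy μ g) (freeEnergy μ h)
      = ∫ x, (Real.exp (g x) * d + Real.exp (h x) * (1 - Real.exp d)) ∂μ := by
        rw [integral_add hgi hhi, integral_mul_const, integral_mul_const, ← exp_freeEnergy μ hg,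
          ← exp_freeEnergy μ hh, expRelEntropy]
        linear_combination exp_shift
    _ ≤ ∫ x, expRelEntropy (g x) (h x) ∂μ :=
        integral_mono (hgi.add hhi) ((hg.expRelEntropy hh).integrable μ) supporting

lemma freeEnergy_prod (μ : Measure Ω) (ν : Measure Ω') [IsProbabilityMeasure μ]
    [IsProbabilityMeasure ν] {g : Ω × Ω' → ℝ} (hg : BddMeasurable g) :
    freeEnergy (μ.prod ν) g = freeEnergy μ fun x ↦ freeEnergy ν fun y ↦ g (x, y) := by
  rw [freeEnergy, integral_prod _ (hg.exp.integrable _)]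
  simp_rw [← exp_freeEnergy ν (hg.comp measurable_prodMk_left)]
  rfl

lemma expEntropy_prod (μ : Measure Ω) (ν : Measure Ω') [IsProbabilityMeasure μ]
    [IsProbabilityMeasure ν] {g : Ω × Ω' → ℝ} (hg : BddMeasurable g) :
    expEntropy (μ.prod ν) g =
      ∫ x, expEntropy ν (fun y ↦ g (x, y)) ∂μ +
        expEntropy μ fun x ↦ freeEnergy ν fun y ↦ g (x, y) := by
  have hF := hg.freeEnergy_prod_right ν
  simp only [expEntropy, freeEnergy_prod μ ν hg]
  rw [integral_prod _ ((hg.exp.mul hg).integrable _),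
    integral_sub (((hg.exp.mul hg).integral_prod_right ν).integrable μ)
      ((hF.exp.mul hF).integrable μ)]
  ring

lemma expEntropy_prod_le (μ : Measure Ω) (ν : Measure Ω') [IsProbabilityMeasure μ]
    [IsProbabilityMeasure ν] {g : Ω × Ω' → ℝ} (hg : BddMeasurable g) {h : Ω' → ℝ}
    (hh : BddMeasurable h) :
    expEntropy (μ.prod ν) g ≤
      ∫ z, expRelEntropy (g z) (h z.2) ∂(μ.prod ν) + ∫ x, expEntropy ν (fun y ↦ g (x, y)) ∂μ := by
  have hF := hg.freeEnergy_prod_right ν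
  have hgh : BddMeasurable fun z ↦ expRelEntropy (g z) (h z.2) :=
    hg.expRelEntropy (hh.comp measurable_snd)
  rw [expEntropy_prod μ ν hg, add_comm]
  gcongr
  calc expEntropy μ (fun x ↦ freeEnergy ν fun y ↦ g (x, y))
      ≤ ∫ x, expRelEntropy (freeEnergy ν fun y ↦ g (x, y)) (freeEnergy ν h) ∂μ :=
        expEntropy_le_integral_expRelEntropy_const μ hF _
    _ ≤ ∫ x, ∫ y, expRelEntropy (g (x, y)) (h y) ∂ν ∂μ :=
        integral_mono ((hF.expRelEntropy (.const _)).integrable μ)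
          ((hgh.integral_prod_right ν).integrable μ)
          fun x ↦ expRelEntropy_freeEnergy_le ν (hg.comp measurable_prodMk_left) hh
    _ = ∫ z, expRelEntropy (g z) (h z.2) ∂(μ.prod ν) := (integral_prod _ (hgh.integrable _)).symm

lemma expEntropy_comp_measurePreserving {μ : Measure Ω} {ν : Measure Ω'} {e : Ω ≃ᵐ Ω'}
    (he : MeasurePreserving e μ ν) (g : Ω' → ℝ) :
    expEntropy μ (fun x ↦ g (e x)) = expEntropy ν g := by
  simp only [expEntropy, freeEnergy, he.integral_comp' (g := fun y ↦ Real.exp (g y) * g y),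
    he.integral_comp' (g := fun y ↦ Real.exp (g y))]

lemma expEntropy_eq_zero_of_subsingleton [Subsingleton Ω] (μ : Measure Ω) [IsProbabilityMeasure μ]
    (g : Ω → ℝ) : expEntropy μ g = 0 := by
  obtain ⟨x₀⟩ := μ.nonempty_of_neZero
  have hg (x : Ω) : g x = g x₀ := congrArg g (Subsingleton.elim x x₀)
  simp [expEntropy, freeEnergy, hg]

end Entropy

section Tensorization

universe u

lemma insertNth_congr_of_dependsOn {n : ℕ} {X : Fin (n + 1) → Type*} {β : Type*}
    {h : (∀ i, X i) → β} {i : Fin (n + 1)} (hh : DependsOn h {i}ᶜ) (x x' : X i)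
    (y : ∀ j, X (i.succAbove j)) : h (i.insertNth x y) = h (i.insertNth x' y) := by
  refine hh fun k hk ↦ ?_
  obtain ⟨j, rfl⟩ := Fin.exists_succAbove_eq hk
  rw [Fin.insertNth_apply_succAbove, Fin.insertNth_apply_succAbove]

lemma dependsOn_insertNth {n : ℕ} {X : Fin (n + 1) → Type*} {β : Type*} {h : (∀ i, X i) → β}
    {i : Fin (n + 1)} {j : Fin n} (hh : DependsOn h {i.succAbove j}ᶜ) (x : X i) :
    DependsOn (fun y ↦ h (i.insertNth x y)) {j}ᶜ := by
  refine fun y y' hy ↦ hh fun k hk ↦ ?_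
  obtain rfl | ⟨l, rfl⟩ := Fin.eq_self_or_eq_succAbove i k
  · rw [Fin.insertNth_apply_same, Fin.insertNth_apply_same]
  · rw [Fin.insertNth_apply_succAbove, Fin.insertNth_apply_succAbove]
    exact hy l fun hlj ↦ hk (congrArg i.succAbove hlj)

theorem expEntropy_pi_le_sum {n : ℕ} {X : Fin n → Type u} [∀ i, MeasurableSpace (X i)]
    (μ : ∀ i, Measure (X i)) [∀ i, IsProbabilityMeasure (μ i)] {g : (∀ i, X i) → ℝ}
    (hg : BddMeasurable g) {h : Fin n → (∀ i, X i) → ℝ} (hh : ∀ i, BddMeasurable (h i))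
    (hdep : ∀ i, DependsOn (h i) {i}ᶜ) :
    expEntropy (Measure.pi μ) g ≤ ∑ i, ∫ ω, expRelEntropy (g ω) (h i ω) ∂(Measure.pi μ) := by
  induction n with
  | zero => simp [expEntropy_eq_zero_of_subsingleton]
  | succ n ih =>
    obtain ⟨x₀⟩ := (μ 0).nonempty_of_neZero
    let ν := Measure.pi fun j ↦ μ (Fin.succAbove 0 j)
    let e := (MeasurableEquiv.piFinSuccAbove X 0).symm
    have he : MeasurePreserving e ((μ 0).prod ν) (Measure.pi μ) :=
      (measurePreserving_piFinSuccAbove μ 0).symm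
    have hge : BddMeasurable fun z ↦ g (e z) := hg.comp e.measurable
    have hhe (i) : BddMeasurable fun z ↦ h i (e z) := (hh i).comp e.measurable
    have head_indep (z) : h 0 (e z) = h 0 (e (x₀, z.2)) :=
      insertNth_congr_of_dependsOn (hdep 0) z.1 x₀ z.2
    have tail_le (x : X 0) := ih (fun j ↦ μ (Fin.succAbove 0 j))
      (hge.comp (measurable_prodMk_left (x := x)))
      (fun j ↦ (hhe (Fin.succAbove 0 j)).comp (measurable_prodMk_left (x := x)))
      (fun j ↦ dependsOn_insertNth (hdep (Fin.succAbove 0 j)) x)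
    have hrel (j) := hge.expRelEntropy (hhe (Fin.succAbove 0 j))
    have hrel_slice (j) := ((hrel j).integral_prod_right ν).integrable (μ 0)
    rw [← expEntropy_comp_measurePreserving he, Fin.sum_univ_succAbove _ 0]
    simp_rw [← he.integral_comp' (g := fun ω ↦ expRelEntropy (g ω) (h _ ω))]
    have split_head :=
      expEntropy_prod_le (μ 0) ν hge ((hhe 0).comp (measurable_prodMk_left (x := x₀)))
    simp_rw [← head_indep] at split_head
    refine split_head.trans ?_
    gcongr
    calc ∫ x, expEntropy ν (fun y ↦ g (e (x, y))) ∂(μ 0)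
        ≤ ∫ x, ∑ j, ∫ y, expRelEntropy (g (e (x, y))) (h (Fin.succAbove 0 j) (e (x, y))) ∂ν ∂μ 0 :=
          integral_mono ((hge.expEntropy_prod_right ν).integrable _)
            (integrable_finsetSum _ fun j _ ↦ hrel_slice j) tail_le
      _ = ∑ j, ∫ z, expRelEntropy (g (e z)) (h (Fin.succAbove 0 j) (e z)) ∂((μ 0).prod ν) := by
          rw [integral_finsetSum _ fun j _ ↦ hrel_slice j]
          exact sum_congr rfl fun j _ ↦ (integral_prod _ ((hrel j).integrable _)).symm

end Tensorization

section Herbst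

lemma one_sub_mul_le_of_mul_deriv_sub_le {F : ℝ → ℝ} (hF : Differentiable ℝ F) (hF₀ : F 0 = 0)
    {a b t : ℝ} (ht : 0 ≤ t)
    (h : ∀ s ∈ Set.Ioo 0 t, s * deriv F s - F s ≤ s ^ 2 * (a * deriv F s + b)) :
    (1 - a * t) * F t ≤ t * deriv F 0 + b * t ^ 2 := by
  obtain rfl | htpos := ht.eq_or_lt
  · simp [hF₀]
  let G s := dslope F 0 s - a * F s - b * s
  have hGcont : ContinuousOn G (Set.Icc 0 t) := by
    have hslope : ContinuousOn (dslope F 0) Set.univ :=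
      (continuousOn_dslope Filter.univ_mem).2 ⟨hF.continuous.continuousOn, hF 0⟩
    exact ((hslope.sub (hF.continuous.const_mul a).continuousOn).sub
      (continuous_const_mul b).continuousOn).mono (Set.subset_univ _)
  have hGderiv (s) (hs : s ∈ Set.Ioo 0 t) :
      HasDerivAt G ((s * deriv F s - F s) / s ^ 2 - a * deriv F s - b) s := by
    have hquot : HasDerivAt (fun r ↦ F r / r) ((deriv F s * s - F s * 1) / s ^ 2) s :=
      (hF s).hasDerivAt.div (hasDerivAt_id' s) hs.1.ne'
    have hslope : dslope F 0 =ᶠ[nhds s] fun r ↦ F r / r := by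
      filter_upwards [isOpen_ne.mem_nhds hs.1.ne'] with r hr
      rw [dslope_of_ne _ hr, slope_def_field, hF₀, sub_zero, sub_zero]
    refine (((hquot.congr_of_eventuallyEq hslope).sub ((hF s).hasDerivAt.const_mul a)).sub
      ((hasDerivAt_id' s).const_mul b)).congr_deriv ?_
    ring
  have hGanti : AntitoneOn G (Set.Icc 0 t) := by
    refine antitoneOn_of_hasDerivWithinAt_nonpos (convex_Icc 0 t) hGcont
      (fun s hs ↦ (hGderiv s (interior_Icc.subset hs)).hasDerivWithinAt) fun s hs ↦ ?_
    rw [interior_Icc] at hs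
    have := (div_le_iff₀' (pow_pos hs.1 2)).2 (h s hs)
    linarith
  have hG₀ : G 0 = deriv F 0 := by simp [G, dslope_same, hF₀]
  have hGt : t * G t = F t - a * t * F t - b * t ^ 2 := by
    simp only [G, dslope_of_ne _ htpos.ne', slope_def_field, hF₀]
    field_simp
    ring
  have := mul_le_mul_of_nonneg_left (hGanti ⟨le_rfl, ht⟩ ⟨ht, le_rfl⟩ ht) ht
  rw [hG₀, hGt] at this
  linarith

lemma one_sub_mul_cgf_le {Ω : Type*} [MeasurableSpace Ω] {μ : Measure Ω} [IsProbabilityMeasure μ]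
    {X : Ω → ℝ} (hX : ∀ t, Integrable (fun ω ↦ Real.exp (t * X ω)) μ) {a b t : ℝ} (ht : 0 ≤ t)
    (h : ∀ s ∈ Set.Ioo 0 t,
      expEntropy μ (fun ω ↦ s * X ω) ≤ s ^ 2 * ∫ ω, Real.exp (s * X ω) * (a * X ω + b) ∂μ) :
    (1 - a * t) * cgf X μ t ≤ t * μ[X] + b * t ^ 2 := by
  have mem_interior (s : ℝ) : s ∈ interior (integrableExpSet X μ) := by
    rw [Set.eq_univ_of_forall (s := integrableExpSet X μ) hX, interior_univ]
    exact Set.mem_univ s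
  have hdiff : Differentiable ℝ (cgf X μ) := fun s ↦
    (analyticAt_cgf (mem_interior s)).differentiableAt
  have hmean : deriv (cgf X μ) 0 = μ[X] := by simp [deriv_cgf_zero (mem_interior 0)]
  rw [← hmean]
  refine one_sub_mul_le_of_mul_deriv_sub_le hdiff cgf_zero ht fun s hs ↦ ?_
  have hpos : 0 < mgf X μ s := mgf_pos (hX s)
  have hXexp : Integrable (fun ω ↦ X ω * Real.exp (s * X ω)) μ := by
    simpa using integrable_pow_mul_exp_of_mem_interior_integrableExpSet (mem_interior s) 1
  have hderiv : deriv (cgf X μ) s * mgf X μ s = ∫ ω, X ω * Real.exp (s * X ω) ∂μ := by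
    rw [deriv_cgf (mem_interior s), div_mul_cancel₀ _ hpos.ne']
  have hent : expEntropy μ (fun ω ↦ s * X ω) =
      (s * deriv (cgf X μ) s - cgf X μ s) * mgf X μ s := by
    rw [sub_mul, mul_assoc, hderiv, ← integral_const_mul, expEntropy, mul_comm (cgf X μ s),
      ← exp_cgf (hX s)]
    simp_rw [mul_comm (Real.exp _) (s * _), mul_assoc]
    rfl
  have hbound : ∫ ω, Real.exp (s * X ω) * (a * X ω + b) ∂μ =
      (a * deriv (cgf X μ) s + b) * mgf X μ s := by
    rw [add_mul, mul_assoc, hderiv, mgf, ← integral_const_mul, ← integral_const_mul,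
      ← integral_add (hXexp.const_mul a) ((hX s).const_mul b)]
    congr with ω
    ring
  have := h s hs
  rw [hent, hbound, ← mul_assoc] at this
  exact le_of_mul_le_mul_right this hpos

end Herbst

section SelfBounding

universe u

/-- The `(a, b)`-self-bounding functions of McDiarmid–Reed and Boucheron–Lugosi–Massart: deleting a
coordinate decreases `f` by at most one, and all these decrements sum to at most `a f + b`. The
function `g i` stands for `f` with the coordinate `i` deleted. -/
def IsSelfBounding {n : ℕ} {X : Fin n → Type*} [∀ i, MeasurableSpace (X i)] (a b : ℝ)
    (f : (∀ i, X i) → ℝ) : Prop :=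
  ∃ g : Fin n → (∀ i, X i) → ℝ, (∀ i, Measurable (g i)) ∧ (∀ i, DependsOn (g i) {i}ᶜ) ∧
    (∀ i ω, f ω - g i ω ∈ Set.Icc 0 1) ∧ ∀ ω, ∑ i, (f ω - g i ω) ≤ a * f ω + b

lemma expRelEntropy_le_of_abs_sub_le_one {u v : ℝ} (huv : |u - v| ≤ 1) :
    expRelEntropy u v ≤ Real.exp u * (u - v) ^ 2 := by
  have taylor := le_of_abs_le (Real.abs_exp_sub_one_sub_id_le (x := v - u) (by rwa [abs_sub_comm]))
  have := mul_le_mul_of_nonneg_left taylor (Real.exp_pos u).le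
  have shift : Real.exp u * Real.exp (v - u) = Real.exp v := by rw [← Real.exp_add, add_sub_cancel]
  rw [expRelEntropy]
  linarith

namespace IsSelfBounding

variable {n : ℕ} {X : Fin n → Type u} [∀ i, MeasurableSpace (X i)] {a b : ℝ} {f : (∀ i, X i) → ℝ}
  {μ : ∀ i, Measure (X i)} [∀ i, IsProbabilityMeasure (μ i)]

lemma expEntropy_le (hf : IsSelfBounding a b f) (hfb : BddMeasurable f) {t : ℝ} (ht : |t| ≤ 1) :
    expEntropy (Measure.pi μ) (fun ω ↦ t * f ω) ≤
      t ^ 2 * ∫ ω, Real.exp (t * f ω) * (a * f ω + b) ∂(Measure.pi μ) := by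
  obtain ⟨g, hgm, hdep, hdecr, hsum⟩ := hf
  have hgb (i) : BddMeasurable (g i) := by
    obtain ⟨C, hC⟩ := hfb.exists_bound
    refine ⟨hgm i, C + 1, fun ω ↦ ?_⟩
    have := abs_le.1 (hC ω)
    have := hdecr i ω
    exact abs_le.2 ⟨by linarith [this.2], by linarith [this.1]⟩
  have pointwise (i ω) : expRelEntropy (t * f ω) (t * g i ω) ≤
      t ^ 2 * (Real.exp (t * f ω) * (f ω - g i ω)) := by
    obtain ⟨h₀, h₁⟩ := hdecr i ω
    have small : |t * f ω - t * g i ω| ≤ 1 := by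
      rw [← mul_sub, abs_mul, abs_of_nonneg h₀]
      exact mul_le_one₀ ht h₀ h₁
    calc expRelEntropy (t * f ω) (t * g i ω)
        ≤ Real.exp (t * f ω) * (t * f ω - t * g i ω) ^ 2 := expRelEntropy_le_of_abs_sub_le_one small
      _ = t ^ 2 * (Real.exp (t * f ω) * (f ω - g i ω) ^ 2) := by ring
      _ ≤ t ^ 2 * (Real.exp (t * f ω) * (f ω - g i ω)) := by
        gcongr
        exact pow_le_of_le_one h₀ h₁ two_ne_zero
  have hdecrb (i) : BddMeasurable fun ω ↦ Real.exp (t * f ω) * (f ω - g i ω) :=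
    (hfb.const_mul t).exp.mul (hfb.sub (hgb i))
  calc expEntropy (Measure.pi μ) (fun ω ↦ t * f ω)
      ≤ ∑ i, ∫ ω, expRelEntropy (t * f ω) (t * g i ω) ∂(Measure.pi μ) :=
        expEntropy_pi_le_sum μ (hfb.const_mul t) (fun i ↦ (hgb i).const_mul t)
          fun i x y hxy ↦ by rw [hdep i hxy]
    _ ≤ ∑ i, t ^ 2 * ∫ ω, Real.exp (t * f ω) * (f ω - g i ω) ∂(Measure.pi μ) := by
        gcongr with i
        rw [← integral_const_mul]
        exact integral_mono (((hfb.const_mul t).expRelEntropy ((hgb i).const_mul t)).integrable _)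
          (((hdecrb i).const_mul _).integrable _) (pointwise i)
    _ = t ^ 2 * ∫ ω, ∑ i, Real.exp (t * f ω) * (f ω - g i ω) ∂(Measure.pi μ) := by
        rw [← mul_sum, integral_finsetSum _ fun i _ ↦ (hdecrb i).integrable _]
    _ ≤ t ^ 2 * ∫ ω, Real.exp (t * f ω) * (a * f ω + b) ∂(Measure.pi μ) := by
        refine mul_le_mul_of_nonneg_left ?_ (sq_nonneg t)
        have hsumb := (hfb.const_mul t).exp.mul ((hfb.const_mul a).add (.const b))
        refine integral_mono (integrable_finsetSum _ fun i _ ↦ (hdecrb i).integrable _)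
          (hsumb.integrable _) fun ω ↦ ?_
        simp only [← mul_sum]
        gcongr
        exact hsum ω

lemma one_sub_mul_cgf_le (hf : IsSelfBounding a b f) (hfb : BddMeasurable f) {t : ℝ}
    (ht : |t| ≤ 1) :
    (1 - a * t) * cgf f (Measure.pi μ) t ≤ t * ∫ ω, f ω ∂(Measure.pi μ) + b * t ^ 2 := by
  rcases le_total 0 t with ht₀ | ht₀
  · refine _root_.one_sub_mul_cgf_le (fun s ↦ (hfb.const_mul s).exp.integrable _) ht₀
      fun s hs ↦ hf.expEntropy_le hfb ?_
    rw [abs_of_nonneg hs.1.le]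
    exact hs.2.le.trans ((le_abs_self t).trans ht)
  · have herbst := _root_.one_sub_mul_cgf_le (X := -f) (μ := Measure.pi μ) (a := -a) (b := b)
      (fun s ↦ by simpa using (hfb.const_mul (-s)).exp.integrable _) (neg_nonneg.2 ht₀)
      fun s hs ↦ by
        have hs₁ : |-s| ≤ 1 := by
          rw [abs_neg, abs_of_nonneg hs.1.le]
          exact hs.2.le.trans ((neg_le_abs t).trans ht)
        simpa using hf.expEntropy_le (μ := μ) hfb hs₁
    simpa [cgf_neg, integral_neg] using herbst

lemma mul_integral_add_nonneg (hf : IsSelfBounding a b f) (hfb : BddMeasurable f) :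
    0 ≤ a * ∫ ω, f ω ∂(Measure.pi μ) + b := by
  obtain ⟨g, -, -, hdecr, hsum⟩ := hf
  have pointwise (ω : ∀ i, X i) : 0 ≤ a * f ω + b :=
    (sum_nonneg fun i _ ↦ (hdecr i ω).1).trans (hsum ω)
  have : 0 ≤ ∫ ω, (a * f ω + b) ∂(Measure.pi μ) := integral_nonneg pointwise
  rwa [integral_add ((hfb.const_mul a).integrable _) (integrable_const b), integral_const_mul,
    integral_const, probReal_univ, one_smul] at this

lemma measureReal_add_le_le_exp (hf : IsSelfBounding a b f) (hfb : BddMeasurable f)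
    (ha : 1 / 2 ≤ a) {E s : ℝ} (hE : ∫ ω, f ω ∂(Measure.pi μ) = E) (hs : 0 < s) :
    (Measure.pi μ).real {ω | E + s ≤ f ω} ≤
      Real.exp (-(s ^ 2 / (2 * (2 * (a * E + b) + a * s)))) := by
  have hV : 0 ≤ a * E + b := hE ▸ hf.mul_integral_add_nonneg hfb
  have has : 0 < a * s := by positivity
  generalize hD : 2 * (a * E + b) + a * s = D
  have hDpos : 0 < D := by linarith
  obtain ⟨t, ht⟩ : ∃ t, t = s / (D + a * s) := ⟨_, rfl⟩
  have ht₀ : 0 < t := by rw [ht]; positivity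
  have ht₁ : |t| ≤ 1 := by
    rw [abs_of_pos ht₀, ht, div_le_one (by positivity)]
    linarith [mul_le_mul_of_nonneg_right ha hs.le]
  have hat : 1 - a * t = D / (D + a * s) := by rw [ht]; field_simp; ring
  have hcgf := hf.one_sub_mul_cgf_le (μ := μ) hfb ht₁
  rw [hE] at hcgf
  refine (measure_ge_le_exp_cgf _ ht₀.le ((hfb.const_mul t).exp.integrable _)).trans ?_
  rw [Real.exp_le_exp]
  refine le_of_mul_le_mul_left ?_ (show 0 < 1 - a * t by rw [hat]; positivity)
  calc (1 - a * t) * (-t * (E + s) + cgf f (Measure.pi μ) t)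
      ≤ -t * s + t ^ 2 * (D + a * s) / 2 := by rw [← hD]; linarith
    _ = (1 - a * t) * -(s ^ 2 / (2 * D)) := by rw [hat, ht]; field_simp; ring

lemma measureReal_le_sub_le_exp (hf : IsSelfBounding a b f) (hfb : BddMeasurable f)
    (ha : 1 / 2 ≤ a) {E s : ℝ} (hE : ∫ ω, f ω ∂(Measure.pi μ) = E) (hs : 0 < s) :
    (Measure.pi μ).real {ω | f ω ≤ E - s} ≤
      Real.exp (-(s ^ 2 / (2 * (2 * (a * E + b) + a * s)))) := by
  have hV : 0 ≤ a * E + b := hE ▸ hf.mul_integral_add_nonneg hfb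
  have has : 0 < a * s := by positivity
  generalize hD : 2 * (a * E + b) + a * s = D
  have hDpos : 0 < D := by linarith
  obtain ⟨t, ht⟩ : ∃ t, t = s / (D + a * s) := ⟨_, rfl⟩
  have ht₀ : 0 < t := by rw [ht]; positivity
  have ht₁ : |-t| ≤ 1 := by
    rw [abs_neg, abs_of_pos ht₀, ht, div_le_one (by positivity)]
    linarith [mul_le_mul_of_nonneg_right ha hs.le]
  have hat : 1 + a * t = (D + 2 * (a * s)) / (D + a * s) := by rw [ht]; field_simp; ring
  have hcgf := hf.one_sub_mul_cgf_le (μ := μ) hfb ht₁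
  rw [hE] at hcgf
  refine (measure_le_le_exp_cgf _ (neg_nonpos.2 ht₀.le)
    ((hfb.const_mul (-t)).exp.integrable _)).trans ?_
  rw [Real.exp_le_exp]
  refine le_of_mul_le_mul_left ?_ (show 0 < 1 + a * t by positivity)
  have hslack : 0 ≤ 2 * (a * s) * (D - a * s) := by
    refine mul_nonneg (by positivity) ?_
    linarith
  calc (1 + a * t) * (- -t * (E - s) + cgf f (Measure.pi μ) (-t))
      ≤ -t * s + t ^ 2 * (D - 3 * (a * s)) / 2 := by rw [← hD]; linarith
    _ = (1 + a * t) * -(s ^ 2 / (2 * D)) - t ^ 2 * (2 * (a * s) * (D - a * s)) / (2 * D) := by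
      rw [hat, ht]; field_simp; ring
    _ ≤ (1 + a * t) * -(s ^ 2 / (2 * D)) := sub_le_self _ (by positivity)

lemma measureReal_le_abs_sub_le_exp (hf : IsSelfBounding a b f) (hfb : BddMeasurable f)
    (ha : 1 / 2 ≤ a) {E s : ℝ} (hE : ∫ ω, f ω ∂(Measure.pi μ) = E) (hs : 0 < s) :
    (Measure.pi μ).real {ω | s ≤ |f ω - E|} ≤
      2 * Real.exp (-(s ^ 2 / (2 * (2 * (a * E + b) + a * s)))) := by
  calc (Measure.pi μ).real {ω | s ≤ |f ω - E|}
      ≤ (Measure.pi μ).real ({ω | E + s ≤ f ω} ∪ {ω | f ω ≤ E - s}) := by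
        refine measureReal_mono fun ω hω ↦ ?_
        rcases le_abs.1 (show s ≤ |f ω - E| from hω) with h | h
        · exact .inl (show E + s ≤ f ω by linarith)
        · exact .inr (show f ω ≤ E - s by linarith)
    _ ≤ _ := by
        rw [two_mul]
        exact (measureReal_union_le _ _).trans (add_le_add
          (hf.measureReal_add_le_le_exp hfb ha hE hs) (hf.measureReal_le_sub_le_exp hfb ha hE hs))

end IsSelfBounding

end SelfBounding

section Counting

variable {ι α : Type*} [DecidableEq α]

/-- The number of occurrences of the value `x` in the sample `ω`, restricted to the indices in
`s`. -/
def occ (s : Finset ι) (ω : ι → α) (x : α) : ℕ := #{i ∈ s | ω i = x}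

lemma occ_erase [DecidableEq ι] {s : Finset ι} {i : ι} (hi : i ∈ s) (ω : ι → α) (x : α) :
    occ (s.erase i) ω x = if ω i = x then occ s ω x - 1 else occ s ω x := by
  rw [occ, filter_erase]
  split_ifs with h
  · exact card_erase_of_mem (mem_filter.2 ⟨hi, h⟩)
  · exact congrArg card (erase_eq_of_notMem fun hmem ↦ h (mem_filter.1 hmem).2)

lemma sum_apply_eq_sum_occ_mul [Fintype ι] [Fintype α] (ω : ι → α) (φ : α → ℝ) :
    ∑ i, φ (ω i) = ∑ x, occ univ ω x * φ x := by
  simp [← sum_fiberwise' univ ω φ, occ]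

variable [Fintype ι] [Fintype α]

/-- The number of ordered pairs of distinct positions of the sample `ω` holding equal values. -/
def collisions (ω : ι → α) : ℝ := ∑ x, (occ univ ω x : ℝ) * (occ univ ω x - 1)

lemma cast_card_offDiag {β : Type*} (s : Finset β) : (#s.offDiag : ℝ) = #s * (#s - 1) := by
  classical
  rw [offDiag_card, Nat.cast_sub (Nat.le_mul_self _)]
  push_cast
  ring

lemma card_colliding_pairs [DecidableEq ι] (ω : ι → α) :
    (#{ij : ι × ι | ij.1 ≠ ij.2 ∧ ω ij.1 = ω ij.2} : ℝ) = collisions ω := by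
  rw [card_eq_sum_card_fiberwise (f := fun ij ↦ ω ij.1) (t := univ) fun _ _ ↦ mem_univ _]
  push_cast
  refine sum_congr rfl fun x _ ↦ ?_
  rw [occ, ← cast_card_offDiag]
  congr 2
  ext ij
  simp only [mem_filter, mem_univ, true_and, mem_offDiag]
  grind

lemma sum_comp_occ_sub_erase [DecidableEq ι] (G : ℕ → ℝ) (ω : ι → α) (i : ι) :
    ∑ x, G (occ univ ω x) - ∑ x, G (occ (univ.erase i) ω x) =
      G (occ univ ω (ω i)) - G (occ univ ω (ω i) - 1) := by
  rw [← sum_sub_distrib, sum_eq_single_of_mem (ω i) (mem_univ _) fun x _ hx ↦ ?_]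
  · rw [occ_erase (mem_univ i), if_pos rfl]
  · rw [occ_erase (mem_univ i), if_neg hx.symm, sub_self]

lemma isSelfBounding_sum_comp_occ {n : ℕ} [MeasurableSpace α] [MeasurableSingletonClass α]
    {G : ℕ → ℝ} {c : ℝ} (hG : ∀ s, G s - G (s - 1) ∈ Set.Icc 0 1)
    (hc : ∀ s, s * (G s - G (s - 1)) ≤ c * G s) :
    IsSelfBounding c 0 fun ω : Fin n → α ↦ ∑ x, G (occ univ ω x) := by
  refine ⟨fun i ω ↦ ∑ x, G (occ (univ.erase i) ω x), fun i ↦ measurable_of_finite _,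
    fun i ω ω' hω ↦ ?_, fun i ω ↦ ?_, fun ω ↦ ?_⟩
  · have hocc (x : α) : occ (univ.erase i) ω x = occ (univ.erase i) ω' x := by
      refine congrArg card (filter_congr fun j hj ↦ ?_)
      rw [hω j (ne_of_mem_erase hj)]
    simp_rw [hocc]
  · rw [sum_comp_occ_sub_erase]
    exact hG _
  · simp_rw [sum_comp_occ_sub_erase]
    rw [sum_apply_eq_sum_occ_mul ω fun x ↦ G (occ univ ω x) - G (occ univ ω x - 1), add_zero,
      mul_sum]
    exact sum_le_sum fun x _ ↦ hc _

end Counting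

section FactorialMoment

variable {ι α : Type*} [Fintype ι] [DecidableEq α]

lemma occ_mul_pred_mul_pow [DecidableEq ι] (ω : ι → α) (x : α) (z : ℝ) :
    (occ univ ω x : ℝ) * (occ univ ω x - 1) * z ^ occ univ ω x =
      ∑ ij ∈ (univ : Finset ι).offDiag,
        ∏ k, if ω k = x then z else if k ∈ ({ij.1, ij.2} : Finset ι) then 0 else 1 := by
  have prod_eq (ij : ι × ι) :
      (∏ k, if ω k = x then z else if k ∈ ({ij.1, ij.2} : Finset ι) then 0 else 1) =
        if ω ij.1 = x ∧ ω ij.2 = x then z ^ occ univ ω x else 0 := by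
    split_ifs with h
    · have hmem (k : ι) (hk : k ∈ ({ij.1, ij.2} : Finset ι)) : ω k = x := by
        obtain rfl | rfl := mem_insert.1 hk |>.imp_right mem_singleton.1
        exacts [h.1, h.2]
      rw [occ, ← prod_const, prod_filter]
      refine prod_congr rfl fun k _ ↦ ?_
      split_ifs with hk hk'
      exacts [rfl, absurd (hmem k hk') hk, rfl]
    · obtain ⟨k, hk, hkx⟩ : ∃ k ∈ ({ij.1, ij.2} : Finset ι), ω k ≠ x := by
        rcases not_and_or.1 h with h | h
        exacts [⟨_, mem_insert_self _ _, h⟩, ⟨_, mem_insert_of_mem (mem_singleton_self _), h⟩]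
      exact prod_eq_zero (mem_univ k) (by rw [if_neg hkx, if_pos hk])
  simp_rw [prod_eq]
  rw [← sum_filter, sum_const, nsmul_eq_mul, occ, ← cast_card_offDiag]
  congr 3
  ext ij
  simp only [mem_filter, mem_univ, true_and, mem_offDiag]
  grind

lemma ite_eq_add_indicator (x y : α) (z w : ℝ) :
    (if y = x then z else w) = w + Set.indicator {x} (fun _ ↦ z - w) y := by
  by_cases hy : y = x <;> simp [hy]

variable [MeasurableSpace α] [MeasurableSingletonClass α] (μ : Measure α) [IsProbabilityMeasure μ]

lemma integrable_ite_eq (x : α) (z w : ℝ) : Integrable (fun y ↦ if y = x then z else w) μ := by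
  simp_rw [ite_eq_add_indicator x _ z w]
  exact (integrable_const w).add ((integrable_const _).indicator (measurableSet_singleton x))

lemma integral_ite_eq (x : α) (z w : ℝ) :
    ∫ y, (if y = x then z else w) ∂μ = w + μ.real {x} * (z - w) := by
  have hx := measurableSet_singleton x
  simp_rw [ite_eq_add_indicator x _ z w]
  rw [integral_add (integrable_const w) ((integrable_const _).indicator hx),
    integral_indicator_const _ hx, integral_const, probReal_univ, one_smul, smul_eq_mul]

lemma integral_occ_mul_pred_mul_pow (x : α) (z : ℝ) :
    ∫ ω, (occ univ ω x : ℝ) * (occ univ ω x - 1) * z ^ occ univ ω x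
        ∂(Measure.pi fun _ : ι ↦ μ) =
      Fintype.card ι * (Fintype.card ι - 1) * (μ.real {x} * z) ^ 2 *
        (1 + μ.real {x} * (z - 1)) ^ (Fintype.card ι - 2) := by
  classical
  simp_rw [occ_mul_pred_mul_pow]
  rw [integral_finsetSum _ fun ij _ ↦ Integrable.fintype_prod fun k ↦ integrable_ite_eq μ x z _]
  have term (ij) (hij : ij ∈ (univ : Finset ι).offDiag) :
      ∫ ω, (∏ k, if ω k = x then z else if k ∈ ({ij.1, ij.2} : Finset ι) then 0 else 1)
          ∂(Measure.pi fun _ : ι ↦ μ) =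
        (μ.real {x} * z) ^ 2 * (1 + μ.real {x} * (z - 1)) ^ (Fintype.card ι - 2) := by
    have hpair : #({ij.1, ij.2} : Finset ι) = 2 := card_pair (mem_offDiag.1 hij).2.2
    have factor (k) :
        ∫ y, (if y = x then z else if k ∈ ({ij.1, ij.2} : Finset ι) then 0 else 1) ∂μ =
          if k ∈ ({ij.1, ij.2} : Finset ι) then μ.real {x} * z else 1 + μ.real {x} * (z - 1) := by
      rw [integral_ite_eq]
      split_ifs <;> simp
    rw [integral_fintype_prod_eq_prod
      (f := fun k y ↦ if y = x then z else if k ∈ ({ij.1, ij.2} : Finset ι) then 0 else 1)]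
    simp_rw [factor]
    rw [prod_ite, prod_const, prod_const, filter_mem_eq_inter, univ_inter, filter_notMem_eq_sdiff,
      ← compl_eq_univ_sdiff, card_compl, hpair]
  rw [sum_congr rfl term, sum_const, nsmul_eq_mul, cast_card_offDiag, card_univ]
  ring

end FactorialMoment

section Truncation

variable {K : ℝ}

/-- The number `s (s - 1) / 2` of pairs among `s` points, divided by `K` and with its increments
capped at one. -/
noncomputable def truncPairs (K : ℝ) (s : ℕ) : ℝ := ∑ j ∈ range s, min (j / K) 1

lemma truncPairs_succ (K : ℝ) (s : ℕ) : truncPairs K (s + 1) = truncPairs K s + min (s / K) 1 :=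
  sum_range_succ _ s

lemma truncPairs_sub_pred_mem_Icc (hK : 0 ≤ K) (s : ℕ) :
    truncPairs K s - truncPairs K (s - 1) ∈ Set.Icc 0 1 := by
  cases s with
  | zero => simp
  | succ s =>
    rw [Nat.add_sub_cancel, truncPairs_succ, add_sub_cancel_left]
    exact ⟨by positivity, min_le_right _ _⟩

lemma mul_truncPairs_sub_pred_le (K : ℝ) (s : ℕ) :
    s * (truncPairs K s - truncPairs K (s - 1)) ≤ 2 * truncPairs K s := by
  induction s with
  | zero => simp [truncPairs]
  | succ s ih =>
    rw [Nat.add_sub_cancel, truncPairs_succ, add_sub_cancel_left]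
    cases s with
    | zero => simp [truncPairs]
    | succ s =>
      rw [Nat.add_sub_cancel, truncPairs_succ, add_sub_cancel_left] at ih
      rw [truncPairs_succ]
      have concave : s * min (((s + 1 : ℕ) : ℝ) / K) 1 ≤ (s + 1 : ℕ) * min (s / K) 1 := by
        rw [mul_min_of_nonneg _ _ (Nat.cast_nonneg _), mul_min_of_nonneg _ _ (Nat.cast_nonneg _)]
        push_cast
        exact min_le_min (by rw [mul_div_left_comm]) (by linarith)
      push_cast at *
      linarith

lemma sum_range_two_mul_cast (s : ℕ) : ∑ j ∈ range s, 2 * (j : ℝ) = s * (s - 1) := by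
  induction s with
  | zero => simp
  | succ s ih =>
    rw [sum_range_succ, ih]
    push_cast
    ring

lemma cast_mul_pred_nonneg (s : ℕ) : 0 ≤ (s : ℝ) * (s - 1) := by
  rw [← sum_range_two_mul_cast]
  positivity

lemma two_mul_truncPairs_le (hK : 0 < K) (s : ℕ) : 2 * K * truncPairs K s ≤ s * (s - 1) := by
  rw [← sum_range_two_mul_cast, truncPairs, mul_sum]
  refine sum_le_sum fun j _ ↦ ?_
  calc 2 * K * min (j / K) 1 ≤ 2 * K * (j / K) := by gcongr; exact min_le_left _ _
    _ = 2 * j := by field_simp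

lemma two_mul_truncPairs_eq (hK : 0 < K) {s : ℕ} (hs : s - 1 ≤ K) :
    2 * K * truncPairs K s = s * (s - 1) := by
  rw [← sum_range_two_mul_cast, truncPairs, mul_sum]
  refine sum_congr rfl fun j hj ↦ ?_
  have hjK : (j : ℝ) ≤ K := by
    have : (j : ℝ) + 1 ≤ s := mod_cast mem_range.1 hj
    linarith
  rw [min_eq_left ((div_le_one hK).2 hjK)]
  field_simp

lemma mul_pred_le_two_mul_truncPairs_add (hK : 0 < K) (s : ℕ) :
    (s * (s - 1) : ℝ) ≤ 2 * K * truncPairs K s + s * (s - 1) * Real.exp (s - 1 - K) := by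
  have hs := cast_mul_pred_nonneg s
  rcases le_total (s - 1 : ℝ) K with h | h
  · rw [two_mul_truncPairs_eq hK h]
    exact le_add_of_nonneg_right (by positivity)
  · have htrunc : 0 ≤ truncPairs K s := sum_nonneg fun j _ ↦ by positivity
    have hexp : 1 ≤ Real.exp (s - 1 - K) := Real.one_le_exp (sub_nonneg.2 h)
    exact le_add_of_nonneg_of_le (by positivity) (le_mul_of_one_le_right hs hexp)

section Samples

variable {ι α : Type*} [Fintype ι] [Fintype α] [DecidableEq α]

/-- The truncated number of collisions of a sample: each value contributes the `truncPairs` of its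
number of occurrences, so that deleting one sample point costs at most one. -/
noncomputable def truncCollisions (K : ℝ) (ω : ι → α) : ℝ := ∑ x, truncPairs K (occ univ ω x)

/-- An exponentially weighted collision count, which controls the collisions that
`truncCollisions K` misses because some value occurs more than `K + 1` times. -/
noncomputable def excess (K : ℝ) (ω : ι → α) : ℝ :=
  ∑ x, (occ univ ω x : ℝ) * (occ univ ω x - 1) * Real.exp (occ univ ω x - 1 - K)

lemma excess_nonneg (K : ℝ) (ω : ι → α) : 0 ≤ excess K ω :=
  sum_nonneg fun _ _ ↦ mul_nonneg (cast_mul_pred_nonneg _) (Real.exp_pos _).le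

lemma two_mul_truncCollisions_le (hK : 0 < K) (ω : ι → α) :
    2 * K * truncCollisions K ω ≤ collisions ω := by
  rw [truncCollisions, mul_sum]
  exact sum_le_sum fun x _ ↦ two_mul_truncPairs_le hK _

lemma collisions_le_two_mul_truncCollisions_add_excess (hK : 0 < K) (ω : ι → α) :
    collisions ω ≤ 2 * K * truncCollisions K ω + excess K ω := by
  rw [truncCollisions, mul_sum, excess, ← sum_add_distrib]
  exact sum_le_sum fun x _ ↦ mul_pred_le_two_mul_truncPairs_add hK _

lemma two_mul_truncCollisions_eq (hK : 0 < K) {ω : ι → α} (hω : excess K ω < K ^ 2) :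
    2 * K * truncCollisions K ω = collisions ω := by
  rw [truncCollisions, mul_sum]
  refine sum_congr rfl fun x _ ↦ two_mul_truncPairs_eq hK ?_
  by_contra! hx
  refine hω.not_ge ?_
  calc K ^ 2 = K * K * 1 := by ring
    _ ≤ occ univ ω x * (occ univ ω x - 1) * Real.exp (occ univ ω x - 1 - K) := by
      gcongr
      · exact cast_mul_pred_nonneg _
      · linarith
      · exact Real.one_le_exp (sub_nonneg.2 hx.le)
    _ ≤ excess K ω := single_le_sum (f := fun x ↦
        (occ univ ω x : ℝ) * (occ univ ω x - 1) * Real.exp (occ univ ω x - 1 - K))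
        (fun _ _ ↦ mul_nonneg (cast_mul_pred_nonneg _) (Real.exp_pos _).le) (mem_univ x)

lemma half_mul_le_abs_truncCollisions_sub (hK : 0 < K) {ω : ι → α} (hω : excess K ω < K ^ 2)
    {ε E v : ℝ} (hε : 0 ≤ ε) (hv : 2 * K * v ≤ E) (hE : E ≤ 2 * K * v + ε / 4 * E)
    (hdev : ε * E < |collisions ω - E|) : ε / 2 * v ≤ |truncCollisions K ω - v| := by
  rw [← two_mul_truncCollisions_eq hK hω] at hdev
  have triangle : |2 * K * truncCollisions K ω - E| ≤
      2 * K * |truncCollisions K ω - v| + (E - 2 * K * v) := by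
    calc |2 * K * truncCollisions K ω - E|
        ≤ |2 * K * truncCollisions K ω - 2 * K * v| + |2 * K * v - E| := abs_sub_le _ _ _
      _ = 2 * K * |truncCollisions K ω - v| + (E - 2 * K * v) := by
        rw [← mul_sub, abs_mul, abs_of_pos (by positivity), abs_sub_comm _ E,
          abs_of_nonneg (sub_nonneg.2 hv)]
  have hεv : ε * (2 * K * v) ≤ ε * E := by gcongr
  refine le_of_mul_le_mul_left ?_ (show 0 < 2 * K by positivity)
  linarith

lemma isSelfBounding_truncCollisions {n : ℕ} [MeasurableSpace α] [MeasurableSingletonClass α]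
    (hK : 0 ≤ K) : IsSelfBounding 2 0 fun ω : Fin n → α ↦ truncCollisions K ω :=
  isSelfBounding_sum_comp_occ (truncPairs_sub_pred_mem_Icc hK) (mul_truncPairs_sub_pred_le K)

end Samples

end Truncation

section Moments

variable {ι α : Type*} [Fintype ι] [Fintype α] [MeasurableSpace α]

/-- The probability that two independent points distributed according to `μ` coincide. -/
noncomputable def collisionProb (μ : Measure α) : ℝ := ∑ x, μ.real {x} ^ 2

lemma measureReal_singleton_le_sqrt_collisionProb (μ : Measure α) (x : α) :
    μ.real {x} ≤ √(collisionProb μ) :=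
  Real.le_sqrt_of_sq_le <|
    single_le_sum (f := fun x ↦ μ.real {x} ^ 2) (fun _ _ ↦ sq_nonneg _) (mem_univ x)

variable [DecidableEq α] [MeasurableSingletonClass α] (μ : Measure α) [IsProbabilityMeasure μ]

lemma integral_collisions :
    ∫ ω, collisions ω ∂(Measure.pi fun _ : ι ↦ μ) =
      Fintype.card ι * (Fintype.card ι - 1) * collisionProb μ := by
  simp_rw [collisions]
  rw [integral_finsetSum _ fun x _ ↦ (BddMeasurable.of_finite _).integrable _, collisionProb,
    mul_sum]
  refine sum_congr rfl fun x _ ↦ ?_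
  simpa using integral_occ_mul_pred_mul_pow (ι := ι) μ x 1

lemma one_add_mul_exp_one_sub_one_pow_le {q : ℝ} (hq : 0 ≤ q) (k : ℕ) :
    (1 + q * (Real.exp 1 - 1)) ^ k ≤ Real.exp (2 * (k * q)) := by
  have he : Real.exp 1 ≤ 3 := Real.exp_one_lt_three.le
  calc (1 + q * (Real.exp 1 - 1)) ^ k ≤ Real.exp (2 * q) ^ k := by
        gcongr
        · have := mul_nonneg hq (sub_nonneg.2 (Real.one_le_exp zero_le_one))
          positivity
        · linarith [Real.add_one_le_exp (2 * q), mul_le_mul_of_nonneg_left he hq]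
    _ = Real.exp (2 * (k * q)) := by rw [← Real.exp_nat_mul]; ring_nf

lemma integral_excess_le (K : ℝ) {m : ℝ} (hm : ∀ x, Fintype.card ι * μ.real {x} ≤ m) :
    ∫ ω, excess K ω ∂(Measure.pi fun _ : ι ↦ μ) ≤
      Fintype.card ι * (Fintype.card ι - 1) * collisionProb μ * Real.exp (1 + 2 * m - K) := by
  have excess_eq (ω : ι → α) : excess K ω = ∑ x, Real.exp (-1 - K) *
      ((occ univ ω x : ℝ) * (occ univ ω x - 1) * Real.exp 1 ^ occ univ ω x) := by
    refine sum_congr rfl fun x _ ↦ ?_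
    rw [← Real.exp_nat_mul, mul_left_comm, ← Real.exp_add]
    ring_nf
  simp_rw [excess_eq]
  rw [integral_finsetSum _ fun x _ ↦ (BddMeasurable.of_finite _).integrable _, collisionProb,
    mul_sum, sum_mul]
  refine sum_le_sum fun x _ ↦ ?_
  have hpairs := cast_mul_pred_nonneg (Fintype.card ι)
  have hpow : (1 + μ.real {x} * (Real.exp 1 - 1)) ^ (Fintype.card ι - 2) ≤ Real.exp (2 * m) := by
    refine (one_add_mul_exp_one_sub_one_pow_le measureReal_nonneg _).trans ?_
    gcongr
    refine le_trans ?_ (hm x)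
    gcongr
    exact Nat.sub_le _ _
  rw [integral_const_mul, integral_occ_mul_pred_mul_pow]
  calc Real.exp (-1 - K) * (Fintype.card ι * (Fintype.card ι - 1) * (μ.real {x} * Real.exp 1) ^ 2 *
        (1 + μ.real {x} * (Real.exp 1 - 1)) ^ (Fintype.card ι - 2))
      ≤ Real.exp (-1 - K) * (Fintype.card ι * (Fintype.card ι - 1) *
          (μ.real {x} * Real.exp 1) ^ 2 * Real.exp (2 * m)) := by gcongr
    _ = Fintype.card ι * (Fintype.card ι - 1) * μ.real {x} ^ 2 * Real.exp (1 + 2 * m - K) := by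
      rw [show 1 + 2 * m - K = (-1 - K) + (1 + 1) + 2 * m by ring]
      simp only [Real.exp_add]
      ring

end Moments

section Concentration

variable {n : ℕ} {m ε : ℝ}

lemma mul_pred_mul_mem_Icc {Q : ℝ} (hQ : 0 ≤ Q) (hn : 2 ≤ n) :
    n * (n - 1) * Q ∈ Set.Icc ((n * √Q) ^ 2 / 2) ((n * √Q) ^ 2) := by
  have hn' : (2 : ℝ) ≤ n := mod_cast hn
  have lower : (n : ℝ) ^ 2 / 2 ≤ n * (n - 1) := by
    linarith [mul_le_mul_of_nonneg_left hn' (Nat.cast_nonneg (α := ℝ) n)]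
  have upper : (n : ℝ) * (n - 1) ≤ n ^ 2 := by linarith
  rw [mul_pow, Real.sq_sqrt hQ, mul_div_right_comm]
  exact ⟨mul_le_mul_of_nonneg_right lower hQ, mul_le_mul_of_nonneg_right upper hQ⟩

lemma exp_neg_le_div_four (hε₀ : 0 < ε) (hε₁ : ε ≤ 1) (hm : 4 ≤ ε ^ 2 * m) :
    Real.exp (-m) ≤ ε / 4 := by
  have : 4 ≤ ε * Real.exp m := by
    calc 4 ≤ ε * (ε * m) := by linarith
      _ ≤ ε * Real.exp m := by
        gcongr
        have hm₀ : 0 ≤ m := nonneg_of_mul_nonneg_right (by linarith) (pow_pos hε₀ 2)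
        linarith [mul_le_of_le_one_left hm₀ hε₁, Real.add_one_le_exp m]
  rw [Real.exp_neg, inv_le_iff_one_le_mul₀ (Real.exp_pos m)]
  linarith

variable {α : Type*} [DecidableEq α] [Fintype α] [MeasurableSpace α] [MeasurableSingletonClass α]
  (μ : Measure α) [IsProbabilityMeasure μ] {K : ℝ}

lemma integral_collisions_mem_Icc (hK : 0 < K) :
    ∫ ω : Fin n → α, collisions ω ∂(Measure.pi fun _ ↦ μ) ∈
      Set.Icc (2 * K * ∫ ω : Fin n → α, truncCollisions K ω ∂(Measure.pi fun _ ↦ μ))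
        (2 * K * ∫ ω : Fin n → α, truncCollisions K ω ∂(Measure.pi fun _ ↦ μ) +
          ∫ ω : Fin n → α, excess K ω ∂(Measure.pi fun _ ↦ μ)) := by
  have integrable (f : (Fin n → α) → ℝ) : Integrable f (Measure.pi fun _ ↦ μ) :=
    (BddMeasurable.of_finite f).integrable _
  rw [← integral_const_mul, ← integral_add (integrable _) (integrable _)]
  exact ⟨integral_mono (integrable _) (integrable _) (two_mul_truncCollisions_le hK),
    integral_mono (integrable _) (integrable _)
      (collisions_le_two_mul_truncCollisions_add_excess hK)⟩

lemma measureReal_sq_le_excess_le_exp (hn : ∀ x, n * μ.real {x} ≤ m) (hm : 1 ≤ m)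
    (hE : n * (n - 1) * collisionProb μ ≤ m ^ 2) :
    (Measure.pi fun _ : Fin n ↦ μ).real {ω | (4 * m) ^ 2 ≤ excess (4 * m) ω} ≤ Real.exp (-m) := by
  have markov := mul_meas_ge_le_integral_of_nonneg (μ := Measure.pi fun _ : Fin n ↦ μ)
    (.of_forall (excess_nonneg (4 * m))) ((BddMeasurable.of_finite _).integrable _) ((4 * m) ^ 2)
  have mean := integral_excess_le (ι := Fin n) μ (4 * m) (m := m) (by simpa using hn)
  rw [Fintype.card_fin] at mean
  refine le_of_mul_le_mul_left (markov.trans (mean.trans ?_)) (show 0 < (4 * m) ^ 2 by positivity)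
  calc n * (n - 1) * collisionProb μ * Real.exp (1 + 2 * m - 4 * m)
      ≤ m ^ 2 * Real.exp (-m) := by gcongr; linarith
    _ ≤ (4 * m) ^ 2 * Real.exp (-m) := by gcongr; linarith

lemma measureReal_le_abs_truncCollisions_sub_le_exp (hK : 0 ≤ K) {v : ℝ}
    (hv : ∫ ω : Fin n → α, truncCollisions K ω ∂(Measure.pi fun _ ↦ μ) = v) (hv₀ : 0 < v)
    (hε₀ : 0 < ε) (hε₁ : ε ≤ 1) :
    (Measure.pi fun _ : Fin n ↦ μ).real {ω | ε / 2 * v ≤ |truncCollisions K ω - v|} ≤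
      2 * Real.exp (-(ε ^ 2 * v / 40)) := by
  refine ((isSelfBounding_truncCollisions hK).measureReal_le_abs_sub_le_exp (.of_finite _)
    (by norm_num) hv (by positivity)).trans ?_
  refine mul_le_mul_of_nonneg_left (Real.exp_le_exp.2 (neg_le_neg ?_)) zero_le_two
  rw [div_le_div_iff₀ (by norm_num) (by positivity)]
  have : 0 ≤ ε ^ 2 * v ^ 2 * (1 - ε) := mul_nonneg (by positivity) (sub_nonneg.2 hε₁)
  linarith

lemma integral_collisions_le_mul_integral_truncCollisions_add (hn : ∀ x, n * μ.real {x} ≤ m)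
    (hε₀ : 0 < ε) (hε₁ : ε ≤ 1) (hm : 1 ≤ m) (hmε : 4 ≤ ε ^ 2 * m) :
    ∫ ω : Fin n → α, collisions ω ∂(Measure.pi fun _ ↦ μ) ≤
      2 * (4 * m) * ∫ ω : Fin n → α, truncCollisions (4 * m) ω ∂(Measure.pi fun _ ↦ μ) +
        ε / 4 * ∫ ω : Fin n → α, collisions ω ∂(Measure.pi fun _ ↦ μ) := by
  have mean := integral_excess_le (ι := Fin n) μ (4 * m) (m := m) (by simpa using hn)
  have hE : 0 ≤ ∫ ω : Fin n → α, collisions ω ∂(Measure.pi fun _ ↦ μ) :=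
    integral_nonneg fun ω ↦ sum_nonneg fun x _ ↦ cast_mul_pred_nonneg _
  have hexp : Real.exp (1 + 2 * m - 4 * m) ≤ ε / 4 :=
    (Real.exp_le_exp.2 (by linarith)).trans (exp_neg_le_div_four hε₀ hε₁ hmε)
  rw [← integral_collisions] at mean
  refine (integral_collisions_mem_Icc μ (by positivity)).2.trans (add_le_add_right ?_ _)
  rw [mul_comm (ε / 4)]
  exact mean.trans (mul_le_mul_of_nonneg_left hexp hE)

/- Off the event `(4m)² ≤ excess (4m)` the truncation is lossless, and on average it loses only a
fraction `ε / 4`, so a deviation of `collisions` is one of `truncCollisions (4m)`. -/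
lemma measureReal_lt_abs_collisions_sub_le_exp (hn : 2 ≤ n) (hε₀ : 0 < ε) (hε₁ : ε ≤ 1) {E : ℝ}
    (hE : n * (n - 1) * collisionProb μ = E) (hm : n * √(collisionProb μ) = m)
    (hmε : 4 ≤ ε ^ 2 * m) :
    (Measure.pi fun _ : Fin n ↦ μ).real {ω | ε * E < |collisions ω - E|} ≤
      3 * Real.exp (-(ε ^ 2 * m / 1000)) := by
  have hm₀ : 0 ≤ m := hm ▸ by positivity
  have hε₂ : ε ^ 2 ≤ 1 := pow_le_one₀ hε₀.le hε₁
  have hm₁ : 4 ≤ m := hmε.trans (mul_le_of_le_one_left hm₀ hε₂)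
  have hQ : 0 ≤ collisionProb μ := sum_nonneg fun _ _ ↦ sq_nonneg _
  obtain ⟨hmE, hEm⟩ := mul_pred_mul_mem_Icc hQ hn
  rw [hm, hE] at hmE hEm
  have hnm (x : α) : n * μ.real {x} ≤ m :=
    hm ▸ mul_le_mul_of_nonneg_left (measureReal_singleton_le_sqrt_collisionProb μ x) n.cast_nonneg
  have hmean : ∫ ω : Fin n → α, collisions ω ∂(Measure.pi fun _ ↦ μ) = E := by
    rw [integral_collisions, Fintype.card_fin, hE]
  obtain ⟨v, hv⟩ : ∃ v, ∫ ω : Fin n → α, truncCollisions (4 * m) ω ∂(Measure.pi fun _ ↦ μ) = v :=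
    ⟨_, rfl⟩
  have hvE := (integral_collisions_mem_Icc (n := n) μ (K := 4 * m) (by positivity)).1
  have hEv := integral_collisions_le_mul_integral_truncCollisions_add (n := n) μ hnm hε₀ hε₁
    (by linarith) hmε
  rw [hv, hmean] at hvE hEv
  have hvm : 3 / 64 * m ≤ v := by
    have : ε * E ≤ E := mul_le_of_le_one_left (by linarith [sq_nonneg m]) hε₁
    refine le_of_mul_le_mul_left ?_ (show 0 < m by linarith)
    linarith
  calc (Measure.pi fun _ : Fin n ↦ μ).real {ω | ε * E < |collisions ω - E|}
      ≤ (Measure.pi fun _ : Fin n ↦ μ).real ({ω | (4 * m) ^ 2 ≤ excess (4 * m) ω} ∪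
          {ω | ε / 2 * v ≤ |truncCollisions (4 * m) ω - v|}) := by
        refine measureReal_mono fun ω hω ↦ (le_or_gt ((4 * m) ^ 2) (excess (4 * m) ω)).imp id ?_
        exact fun h ↦ half_mul_le_abs_truncCollisions_sub (by positivity) h hε₀.le hvE hEv hω
    _ ≤ Real.exp (-m) + 2 * Real.exp (-(ε ^ 2 * v / 40)) :=
        (measureReal_union_le _ _).trans <| add_le_add
          (measureReal_sq_le_excess_le_exp μ hnm (by linarith) (hE.trans_le hEm))
          (measureReal_le_abs_truncCollisions_sub_le_exp μ (by positivity) hv (by linarith) hε₀ hε₁)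
    _ ≤ Real.exp (-(ε ^ 2 * m / 1000)) + 2 * Real.exp (-(ε ^ 2 * m / 1000)) := by
        have hεm : ε ^ 2 * m ≤ m := mul_le_of_le_one_left hm₀ hε₂
        have hεv : ε ^ 2 * (3 / 64 * m) ≤ ε ^ 2 * v := by gcongr
        refine add_le_add (Real.exp_le_exp.2 ?_)
          (mul_le_mul_of_nonneg_left (Real.exp_le_exp.2 ?_) zero_le_two) <;> linarith
    _ = 3 * Real.exp (-(ε ^ 2 * m / 1000)) := by ring

end Concentration

section Estimator

variable {α : Type} [DecidableEq α] [Fintype α]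

lemma collEst_eq (n : ℕ) (ω : Fin n → α) : collEst n ω = collisions ω / (n * (n - 1)) := by
  rw [collEst, card_colliding_pairs]

variable [MeasurableSpace α] [MeasurableSingletonClass α] (μ : Measure α) [IsProbabilityMeasure μ]

lemma measureReal_lt_abs_collEst_sub_le_exp {n : ℕ} {ε : ℝ} (hn : 2 ≤ n) (hε₀ : 0 < ε)
    (hε₁ : ε ≤ 1) :
    (Measure.pi fun _ : Fin n ↦ μ).real
        {ω | ε * collisionProb μ < |collEst n ω - collisionProb μ|} ≤
      3 * Real.exp (-(1 / 1000) * n * ε ^ 2 * √(collisionProb μ)) := by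
  obtain ⟨m, hm⟩ : ∃ m, n * √(collisionProb μ) = m := ⟨_, rfl⟩
  have exponent : -(1 / 1000) * n * ε ^ 2 * √(collisionProb μ) = -(ε ^ 2 * m / 1000) := by
    rw [← hm]
    ring
  rw [exponent]
  rcases le_or_gt 4 (ε ^ 2 * m) with hmε | hmε
  · have hpairs : 0 < (n : ℝ) * (n - 1) := by
      have : (2 : ℝ) ≤ n := mod_cast hn
      exact mul_pos (by linarith) (by linarith)
    have rescale (ω : Fin n → α) : collisions ω - n * (n - 1) * collisionProb μ =
        n * (n - 1) * (collEst n ω - collisionProb μ) := by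
      rw [collEst_eq, mul_sub _ (collisions ω / _), mul_div_cancel₀ _ hpairs.ne']
    refine (measureReal_mono fun ω hω ↦ ?_).trans
      (measureReal_lt_abs_collisions_sub_le_exp μ hn hε₀ hε₁ rfl hm hmε)
    change ε * (n * (n - 1) * collisionProb μ) < |collisions ω - n * (n - 1) * collisionProb μ|
    rw [rescale, abs_mul, abs_of_pos hpairs, mul_left_comm]
    exact mul_lt_mul_of_pos_left hω hpairs
  · refine measureReal_le_one.trans ?_
    linarith [Real.add_one_le_exp (-(ε ^ 2 * m / 1000))]

end Estimator

/-- Relative-error collision (Rényi-2 entropy) estimation. -/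
theorem collision_estimation_relative :
    ∃ C c : ℝ, 0 < C ∧ 0 < c ∧
      ∀ (α : Type) [Fintype α] [DecidableEq α] [MeasurableSpace α] [MeasurableSingletonClass α]
        (p : α → ℝ), (∀ x, 0 ≤ p x) → (∑ x, p x = 1) →
      ∀ (μ : Measure α) [IsProbabilityMeasure μ], (∀ x, μ {x} = ENNReal.ofReal (p x)) →
      ∀ (n : ℕ), 2 ≤ n → ∀ ε : ℝ, 0 < ε → ε < 1 →
        (Measure.pi fun _ : Fin n => μ)
            {ω : Fin n → α | ε * (∑ x, (p x) ^ 2) < |collEst n ω - ∑ x, (p x) ^ 2|}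
          ≤ ENNReal.ofReal (C * Real.exp
              (-c * (n : ℝ) * ε ^ 2 * Real.sqrt (∑ x, (p x) ^ 2))) := by
  refine ⟨3, 1 / 1000, by norm_num, by norm_num, ?_⟩
  intro α _ _ _ _ p hp _ μ _ hμ n hn ε hε₀ hε₁
  have hQ : ∑ x, p x ^ 2 = collisionProb μ :=
    sum_congr rfl fun x _ ↦ by rw [measureReal_def, hμ, ENNReal.toReal_ofReal (hp x)]
  rw [hQ, ← ofReal_measureReal]
  exact ENNReal.ofReal_le_ofReal (measureReal_lt_abs_collEst_sub_le_exp μ hn hε₀ hε₁.le)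
end

section
/- There exists a universal constant C > 0 such that for every finite type α, every probability mass function p, every n ≥ 2, every x ∈ α with p(x) > 0, and every even integer d ≥ 2: E[ |(S_x² − S_x) − E[S_x² − S_x]|^d ] ≤ (C·d)^d · (n·p(x))² · (max(d, n·p(x)))^(d−2) + (C·d)^(d/2) · (n·p(x))^(d+1) · (max(d, n·p(x)))^(d/2 − 1). -/
/-!
The count `S = S_x` is binomial with parameters `n` and `q = p x`; write `m = n q`, so that
`E[S² - S] = n (n - 1) q² ≤ m²`.

If `m ≤ d`, the moments of `S² - S` itself are small enough. One factor `S² - S` is kept apart and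
`(S² - S)^(d - 1) ≤ (2 (d - 1))^(2 (d - 1)) e^S`; under the exponential tilt
`E[(S² - S) e^S] = n (n - 1) (q e)² (1 - q + q e)^(n - 2)`, which retains the factor `m²`.

If `d ≤ m`, centre first: `S² - S - E[S² - S] = (S - m)² + (2 m - 1) (S - m) - m (1 - q)`, and the
even moments of `S - m` are at most Gaussian, `E[(S - m)^(2 j)] ≤ 2 (12 j m)^j` for `j ≤ m`.
-/

open MeasureTheory ProbabilityTheory Finset

/-- The bin count `S_x`: number of sample points equal to `x`. -/
def binCount {α : Type} [DecidableEq α] (n : ℕ) (x : α) (ω : Fin n → α) : ℕ :=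
  (Finset.univ.filter fun i => ω i = x).card

lemma add_add_pow_le {K : Type*} [Field K] [LinearOrder K] [IsStrictOrderedRing K] {a b c : K}
    (ha : 0 ≤ a) (hb : 0 ≤ b) (hc : 0 ≤ c) (n : ℕ) :
    (a + b + c) ^ n ≤ 3 ^ (n - 1) * (a ^ n + b ^ n + c ^ n) := by
  cases n with
  | zero => norm_num
  | succ n =>
    have h := pow_sum_div_card_le_sum_pow (s := univ) (f := ![a, b, c])
      (by simp [Fin.forall_fin_succ, ha, hb, hc]) n
    rw [div_le_iff₀' (by simp)] at h
    simpa [Fin.sum_univ_three] using h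

lemma abs_sub_pow_le_pow_add_pow {R : Type*} [Ring R] [LinearOrder R] [IsStrictOrderedRing R]
    {a b : R} (ha : 0 ≤ a) (hb : 0 ≤ b) (n : ℕ) :
    |a - b| ^ n ≤ a ^ n + b ^ n := by
  wlog hba : b ≤ a generalizing a b
  · rw [abs_sub_comm, add_comm]
    exact this hb ha (le_of_not_ge hba)
  rw [abs_of_nonneg (sub_nonneg.2 hba)]
  exact (pow_le_pow_left₀ (sub_nonneg.2 hba) (sub_le_self a hb) n).trans
    (le_add_of_nonneg_right (pow_nonneg hb n))

lemma natCast_sq_sub_self_nonneg (k : ℕ) : (0 : ℝ) ≤ (k : ℝ) ^ 2 - k :=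
  sub_nonneg.2 (by exact_mod_cast Nat.le_self_pow two_ne_zero k)

lemma natCast_sq_sub_self_pow_le (k r : ℕ) :
    ((k : ℝ) ^ 2 - k) ^ r ≤ (2 * r) ^ (2 * r) * Real.exp 1 ^ k := by
  have h_exp := rpow_abs_le_mul_exp_abs (k : ℝ) (Nat.cast_nonneg (2 * r)) one_ne_zero
  simp only [Real.rpow_natCast, Nat.abs_cast, abs_one, div_one, one_mul] at h_exp
  calc ((k : ℝ) ^ 2 - k) ^ r ≤ ((k : ℝ) ^ 2) ^ r :=
        pow_le_pow_left₀ (natCast_sq_sub_self_nonneg k) (sub_le_self _ k.cast_nonneg) r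
    _ ≤ (2 * r) ^ (2 * r) * Real.exp 1 ^ k := by
        rw [← pow_mul, Real.exp_one_pow]
        exact_mod_cast h_exp

lemma natCast_mul_sub_one_mul_sq_nonneg (n : ℕ) (x : ℝ) : 0 ≤ (n : ℝ) * (n - 1) * x ^ 2 :=
  mul_nonneg (by linarith [natCast_sq_sub_self_nonneg n]) (sq_nonneg x)

lemma natCast_mul_sub_one_mul_sq_le (n : ℕ) (x : ℝ) :
    (n : ℝ) * (n - 1) * x ^ 2 ≤ (n * x) ^ 2 := by
  nlinarith [mul_nonneg n.cast_nonneg (sq_nonneg x)]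

lemma exp_natCast_le_three_pow (j : ℕ) : Real.exp j ≤ 3 ^ j := by
  rw [← Real.exp_one_pow]
  exact pow_le_pow_left₀ (Real.exp_nonneg 1) Real.exp_one_lt_three.le j

lemma two_mul_pow_add_pow_mul_pow_add_pow_le {h : ℕ} {m : ℝ} (hh : 0 < h) (hm : 2 * h ≤ m) :
    2 * (12 * (2 * h) * m) ^ (2 * h) + (2 * m) ^ (2 * h) * (2 * (12 * h * m) ^ h) + m ^ (2 * h) ≤
      5 * (144 * (2 * h) * m ^ 3) ^ h := by
  have hh' : (1 : ℝ) ≤ h := by exact_mod_cast hh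
  have hm' : 1 ≤ m := by linarith
  have h_quartic : (12 * (2 * h) * m) ^ (2 * h) ≤ (144 * (2 * h) * m ^ 3) ^ h := by
    rw [pow_mul]
    refine pow_le_pow_left₀ (by positivity) ?_ h
    calc (12 * (2 * h) * m) ^ 2 = 144 * (2 * h) * m ^ 2 * (2 * h) := by ring
      _ ≤ 144 * (2 * h) * m ^ 2 * m := by gcongr
      _ = 144 * (2 * h) * m ^ 3 := by ring
  have h_quadratic : (2 * m) ^ (2 * h) * (12 * h * m) ^ h ≤ (144 * (2 * h) * m ^ 3) ^ h := by
    rw [pow_mul, ← mul_pow]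
    refine pow_le_pow_left₀ (by positivity) ?_ h
    calc (2 * m) ^ 2 * (12 * h * m) = 24 * (2 * h) * m ^ 3 := by ring
      _ ≤ 144 * (2 * h) * m ^ 3 := by gcongr; norm_num
  have h_constant : m ^ (2 * h) ≤ (144 * (2 * h) * m ^ 3) ^ h := by
    rw [pow_mul]
    refine pow_le_pow_left₀ (by positivity) ?_ h
    calc m ^ 2 ≤ m ^ 3 := pow_le_pow_right₀ hm' (by norm_num)
      _ ≤ 144 * (2 * h) * m ^ 3 := le_mul_of_one_le_left (by positivity) (by linarith)
  linarith

lemma integral_rpow_abs_le_mul_mgf_add_mgf {Ω : Type*} [MeasurableSpace Ω] {P : Measure Ω}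
    {X : Ω → ℝ} {p t : ℝ} (hp : 0 ≤ p) (ht : 0 < t)
    (h_pos : Integrable (fun ω ↦ Real.exp (t * X ω)) P)
    (h_neg : Integrable (fun ω ↦ Real.exp (-t * X ω)) P) :
    ∫ ω, |X ω| ^ p ∂P ≤ (p / t) ^ p * (mgf X P t + mgf X P (-t)) := by
  rw [mgf, mgf, ← integral_add h_pos h_neg, ← integral_const_mul]
  refine integral_mono (integrable_rpow_abs_of_integrable_exp_mul ht.ne' h_pos h_neg hp)
    ((h_pos.add h_neg).const_mul _) fun ω ↦ ?_
  refine (rpow_abs_le_mul_max_exp_of_pos (X ω) hp ht).trans ?_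
  gcongr
  exact max_le_add_of_nonneg (Real.exp_nonneg _) (Real.exp_nonneg _)

open Polynomial in
lemma coeff_C_mul_add_C_pow {R : Type*} [CommSemiring R] (a b : R) (p : R[X]) (n j : ℕ) :
    ((C a * p + C b) ^ n).coeff j =
      ∑ k ∈ range (n + 1), n.choose k * a ^ k * b ^ (n - k) * (p ^ k).coeff j := by
  rw [add_pow, finsetSum_coeff]
  refine sum_congr rfl fun k _ ↦ ?_
  rw [← coeff_C_mul]
  congr 1
  simp only [C_mul, C_pow, C_eq_natCast]
  ring

section BinomialCount

variable {ι α : Type*} [Fintype ι] [MeasurableSpace α] {μ : Measure α} [IsProbabilityMeasure μ]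
  {P : α → Prop} [DecidablePred P]

lemma pi_real_setOf_filter_eq (hP : MeasurableSet {a | P a}) (s : Finset ι) :
    (Measure.pi fun _ : ι ↦ μ).real {ω | ({i | P (ω i)} : Finset ι) = s} =
      μ.real {a | P a} ^ #s * (1 - μ.real {a | P a}) ^ (Fintype.card ι - #s) := by
  classical
  have h_box : {ω : ι → α | ({i | P (ω i)} : Finset ι) = s} =
      Set.univ.pi fun i ↦ if i ∈ s then {a | P a} else {a | P a}ᶜ := by
    ext ω
    simp only [Set.mem_ofPred_eq, Finset.ext_iff, mem_filter_univ, Set.mem_univ_pi]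
    refine forall_congr' fun i ↦ ?_
    split_ifs with hi <;> simp [hi]
  rw [h_box, measureReal_def, Measure.pi_pi, ENNReal.toReal_prod]
  simp only [apply_ite μ, apply_ite ENNReal.toReal, ← measureReal_def, probReal_compl_eq_one_sub hP]
  rw [prod_ite, prod_const, prod_const, filter_mem_eq_inter, univ_inter, filter_notMem_eq_sdiff,
    card_univ_sdiff]

lemma measurable_card_filter (hP : MeasurableSet {a | P a}) :
    Measurable fun ω : ι → α ↦ #{i | P (ω i)} := by
  simp only [card_filter]
  exact Finset.measurable_sum _ fun i _ ↦
    Measurable.ite (measurable_pi_apply i hP) measurable_const measurable_const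

lemma hasLaw_card_filter_pi (hP : MeasurableSet {a | P a}) {q : unitInterval}
    (hq : μ.real {a | P a} = q) :
    HasLaw (fun ω : ι → α ↦ #{i | P (ω i)}) Bin(Fintype.card ι, q) (Measure.pi fun _ ↦ μ) where
  aemeasurable := (measurable_card_filter hP).aemeasurable
  map_eq := by
    classical
    have h_count := measurable_card_filter (ι := ι) hP
    have := Measure.isProbabilityMeasure_map (μ := Measure.pi fun _ : ι ↦ μ) h_count.aemeasurable
    refine Measure.ext_of_measureReal_singleton fun k ↦ ?_
    have h_fiber : (fun ω : ι → α ↦ #{i | P (ω i)}) ⁻¹' {k} =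
        ⋃ s ∈ powersetCard k (univ : Finset ι), {ω | ({i | P (ω i)} : Finset ι) = s} := by
      ext ω
      simp
    have h_meas (s : Finset ι) : MeasurableSet {ω : ι → α | ({i | P (ω i)} : Finset ι) = s} := by
      simp only [Finset.ext_iff, mem_filter_univ, Set.ofPred_forall]
      exact MeasurableSet.iInter fun i ↦
        (measurable_pi_apply i hP).iff (MeasurableSet.const _)
    rw [map_measureReal_apply h_count (measurableSet_singleton k), h_fiber,
      measureReal_biUnion_finset _ fun s _ ↦ h_meas s, binomial_real_singleton]
    · have h_prob {s : Finset ι} (hs : s ∈ powersetCard k univ) :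
          (Measure.pi fun _ : ι ↦ μ).real {ω | ({i | P (ω i)} : Finset ι) = s} =
            q ^ k * (1 - q) ^ (Fintype.card ι - k) := by
        rw [pi_real_setOf_filter_eq hP, (mem_powersetCard.1 hs).2, hq]
      rw [sum_congr rfl fun _ ↦ h_prob, sum_const, card_powersetCard, card_univ, nsmul_eq_mul,
        mul_assoc]
    · exact fun s _ s' _ hss' ↦ Set.disjoint_left.2 fun ω hs hs' ↦ hss' (hs.symm.trans hs')

end BinomialCount

section Binomial

variable (n : ℕ) (q : unitInterval)

open Polynomial in
lemma integral_choose_mul_pow_binomial (j : ℕ) (t : ℝ) :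
    ∫ k, (k.choose j : ℝ) * t ^ k ∂Bin(n, q) =
      n.choose j * (q * t) ^ j * (1 - q + q * t) ^ (n - j) := by
  -- Both sides are the coefficient of `X ^ j` in `(1 - q + q * t * (1 + X)) ^ n`.
  have h_shift : (C (q * t : ℝ) * (1 + X) + C (1 - q : ℝ)) ^ n =
      (C (q * t : ℝ) * X + C (1 - q + q * t : ℝ)) ^ n := by
    simp only [C_add]
    ring
  calc ∫ k, (k.choose j : ℝ) * t ^ k ∂Bin(n, q)
      = ((C (q * t : ℝ) * (1 + X) + C (1 - q : ℝ)) ^ n).coeff j := by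
        rw [integral_binomial, ← Nat.range_succ_eq_Iic, coeff_C_mul_add_C_pow]
        refine sum_congr rfl fun k _ ↦ ?_
        rw [coeff_one_add_X_pow, smul_eq_mul]
        ring
    _ = n.choose j * (q * t) ^ j * (1 - q + q * t) ^ (n - j) := by
        rw [h_shift, coeff_C_mul_add_C_pow]
        simp only [coeff_X_pow, mul_ite, mul_one, mul_zero, sum_ite_eq, mem_range]
        split_ifs with h
        · ring
        · simp [Nat.choose_eq_zero_of_lt (by lia : n < j)]

lemma integral_sq_sub_self_mul_pow_binomial (t : ℝ) :
    ∫ k, ((k : ℝ) ^ 2 - k) * t ^ k ∂Bin(n, q) =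
      n * (n - 1) * (q * t) ^ 2 * (1 - q + q * t) ^ (n - 2) := by
  have h_choose (k : ℕ) : (k : ℝ) ^ 2 - k = 2 * k.choose 2 := by
    rw [Nat.cast_choose_two]
    ring
  simp only [h_choose, mul_assoc, integral_const_mul]
  rw [integral_choose_mul_pow_binomial, Nat.cast_choose_two]
  ring

lemma integral_sq_sub_self_binomial :
    ∫ k, ((k : ℝ) ^ 2 - k) ∂Bin(n, q) = n * (n - 1) * (q : ℝ) ^ 2 := by
  simpa using integral_sq_sub_self_mul_pow_binomial n q 1

lemma mgf_natCast_binomial (t : ℝ) :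
    mgf (fun k : ℕ ↦ (k : ℝ)) Bin(n, q) t = (1 - q + q * Real.exp t) ^ n := by
  simpa [mgf, mul_comm t, Real.exp_nat_mul] using
    integral_choose_mul_pow_binomial n q 0 (Real.exp t)

lemma one_sub_add_mul_pow_le_exp {s : ℝ} (hs : 0 ≤ s) :
    (1 - q + q * s) ^ n ≤ Real.exp (n * q * (s - 1)) := by
  have h_nonneg : 0 ≤ 1 - (q : ℝ) + q * s :=
    add_nonneg (sub_nonneg.2 q.2.2) (mul_nonneg q.2.1 hs)
  calc (1 - q + q * s) ^ n ≤ Real.exp (q * (s - 1)) ^ n :=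
        pow_le_pow_left₀ h_nonneg (by linarith [Real.add_one_le_exp (q * (s - 1))]) n
    _ = Real.exp (n * q * (s - 1)) := by rw [← Real.exp_nat_mul, mul_assoc]

lemma mgf_sub_mean_binomial_le {t : ℝ} (ht : |t| ≤ 1) :
    mgf (fun k : ℕ ↦ (k : ℝ) - n * q) Bin(n, q) t ≤ Real.exp (n * q * t ^ 2) := by
  have hq : (0 : ℝ) ≤ q := q.2.1
  have h_exp : Real.exp t - 1 - t ≤ t ^ 2 := (abs_le.1 (Real.abs_exp_sub_one_sub_id_le ht)).2
  calc mgf (fun k : ℕ ↦ (k : ℝ) - n * q) Bin(n, q) t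
      = (1 - q + q * Real.exp t) ^ n * Real.exp (-(t * (n * q))) := by
        simp only [sub_eq_add_neg (G := ℝ) _ (_ * _), mgf_add_const, mgf_natCast_binomial, mul_neg]
    _ ≤ Real.exp (n * q * (Real.exp t - 1)) * Real.exp (-(t * (n * q))) := by
        gcongr
        exact one_sub_add_mul_pow_le_exp n q (Real.exp_nonneg t)
    _ = Real.exp (n * q * (Real.exp t - 1 - t)) := by
        rw [← Real.exp_add]
        ring_nf
    _ ≤ Real.exp (n * q * t ^ 2) := by gcongr

lemma integral_sub_mean_pow_binomial_le {j : ℕ} (hj : 0 < j) (hjn : (j : ℝ) ≤ n * q) :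
    ∫ k, ((k : ℝ) - n * q) ^ (2 * j) ∂Bin(n, q) ≤ 2 * (12 * j * (n * q)) ^ j := by
  have hj' : (0 : ℝ) < j := by exact_mod_cast hj
  have hnq : 0 < (n : ℝ) * q := hj'.trans_le hjn
  -- This `t` minimizes `t ^ (-2 * j) * exp (n * q * t ^ 2)`; `j ≤ n * q` makes `t ≤ 1`.
  set t := √(j / (n * q))
  have ht : 0 < t := Real.sqrt_pos.2 (by positivity)
  have ht_sq : t ^ 2 = j / (n * q) := Real.sq_sqrt (by positivity)
  have ht_abs : |t| ≤ 1 := by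
    rw [abs_of_pos ht, Real.sqrt_le_one]
    exact (div_le_one hnq).2 hjn
  have h_exp : Real.exp (n * q * t ^ 2) ≤ 3 ^ j := by
    rw [ht_sq, mul_div_cancel₀ _ hnq.ne']
    exact exp_natCast_le_three_pow j
  have h_pos := (mgf_sub_mean_binomial_le n q ht_abs).trans h_exp
  have h_neg := (mgf_sub_mean_binomial_le n q ((abs_neg t).trans_le ht_abs)).trans
    ((neg_sq t).symm ▸ h_exp)
  have h_scale : ((2 * j : ℕ) / t) ^ (2 * j) = (4 * j * (n * q)) ^ j := by
    rw [pow_mul, div_pow, ht_sq]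
    congr 1
    push_cast
    field_simp
    ring
  have h_moment := integral_rpow_abs_le_mul_mgf_add_mgf (P := Bin(n, q))
    (X := fun k : ℕ ↦ (k : ℝ) - n * q) (Nat.cast_nonneg (2 * j)) ht
    (integrable_binomial _) (integrable_binomial _)
  simp only [Real.rpow_natCast, (even_two_mul j).pow_abs, h_scale] at h_moment
  calc ∫ k, ((k : ℝ) - n * q) ^ (2 * j) ∂Bin(n, q)
      ≤ (4 * j * (n * q)) ^ j * (3 ^ j + 3 ^ j) := h_moment.trans (by gcongr)
    _ = 2 * (12 * j * (n * q)) ^ j := by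
        rw [show 12 * (j : ℝ) * (n * q) = 4 * j * (n * q) * 3 by ring, mul_pow _ (3 : ℝ)]
        ring

lemma integral_sq_sub_self_pow_succ_binomial_le (r : ℕ) :
    ∫ k, ((k : ℝ) ^ 2 - k) ^ (r + 1) ∂Bin(n, q) ≤
      (2 * r) ^ (2 * r) * (n * q) ^ 2 * Real.exp (2 + 2 * (n * q)) := by
  have hq : (0 : ℝ) ≤ q := q.2.1
  have he : Real.exp 1 - 1 ≤ 2 := by linarith [Real.exp_one_lt_three]
  have h_tilt : (1 - q + q * Real.exp 1) ^ (n - 2) ≤ Real.exp (2 * (n * q)) := by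
    calc (1 - q + q * Real.exp 1) ^ (n - 2) ≤ Real.exp ((n - 2 : ℕ) * q * (Real.exp 1 - 1)) :=
          one_sub_add_mul_pow_le_exp (n - 2) q (Real.exp_nonneg 1)
      _ ≤ Real.exp (n * q * 2) := by
          gcongr
          · linarith [Real.add_one_le_exp 1]
          · exact Nat.sub_le n 2
      _ = Real.exp (2 * (n * q)) := by rw [mul_comm]
  calc ∫ k, ((k : ℝ) ^ 2 - k) ^ (r + 1) ∂Bin(n, q)
      ≤ ∫ k, (2 * r) ^ (2 * r) * (((k : ℝ) ^ 2 - k) * Real.exp 1 ^ k) ∂Bin(n, q) := by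
        refine integral_mono (integrable_binomial _) (integrable_binomial _) fun k ↦ ?_
        beta_reduce
        rw [pow_succ', mul_left_comm]
        gcongr
        · exact natCast_sq_sub_self_nonneg k
        · exact natCast_sq_sub_self_pow_le k r
    _ = (2 * r) ^ (2 * r) * (n * (n - 1) * (q : ℝ) ^ 2 * Real.exp 2 *
          (1 - q + q * Real.exp 1) ^ (n - 2)) := by
        rw [integral_const_mul, integral_sq_sub_self_mul_pow_binomial, mul_pow (q : ℝ),
          Real.exp_one_pow, Nat.cast_ofNat]
        ring
    _ ≤ (2 * r) ^ (2 * r) * ((n * q) ^ 2 * Real.exp 2 * Real.exp (2 * (n * q))) := by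
        gcongr
        · have : 0 ≤ 1 - (q : ℝ) := sub_nonneg.2 q.2.2
          positivity
        · exact natCast_mul_sub_one_mul_sq_le n q
    _ = (2 * r) ^ (2 * r) * (n * q) ^ 2 * Real.exp (2 + 2 * (n * q)) := by
        rw [Real.exp_add]
        ring

lemma integral_sq_sub_self_pow_binomial_le {d : ℕ} (hd : 2 ≤ d) (hnd : (n : ℝ) * q ≤ d) :
    ∫ k, ((k : ℝ) ^ 2 - k) ^ d ∂Bin(n, q) ≤
      (108 * d) ^ d * ((n : ℝ) * q) ^ 2 * (d : ℝ) ^ (d - 2) := by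
  have h_exp : Real.exp (2 + 2 * (n * q)) ≤ 27 ^ d := by
    calc Real.exp (2 + 2 * (n * q)) ≤ Real.exp (3 * d : ℕ) := by
          gcongr
          have : (2 : ℝ) ≤ d := by exact_mod_cast hd
          push_cast
          linarith
      _ ≤ 3 ^ (3 * d) := exp_natCast_le_three_pow _
      _ = 27 ^ d := by rw [pow_mul]; norm_num
  obtain ⟨r, rfl⟩ := Nat.exists_eq_add_of_le' (one_le_two.trans hd)
  have h_base : (2 * r : ℝ) ^ (2 * r) ≤ 4 ^ (r + 1) * ((r + 1 : ℕ) : ℝ) ^ (2 * r) := by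
    calc (2 * r : ℝ) ^ (2 * r) ≤ (2 * (r + 1 : ℕ) : ℝ) ^ (2 * r) := by
          gcongr
          lia
      _ = 4 ^ r * ((r + 1 : ℕ) : ℝ) ^ (2 * r) := by
          rw [mul_pow, pow_mul 2]
          norm_num
      _ ≤ 4 ^ (r + 1) * ((r + 1 : ℕ) : ℝ) ^ (2 * r) := by
          gcongr
          · norm_num
          · exact Nat.le_succ r
  calc ∫ k, ((k : ℝ) ^ 2 - k) ^ (r + 1) ∂Bin(n, q)
      ≤ (2 * r) ^ (2 * r) * (n * q) ^ 2 * Real.exp (2 + 2 * (n * q)) :=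
        integral_sq_sub_self_pow_succ_binomial_le n q r
    _ ≤ 4 ^ (r + 1) * ((r + 1 : ℕ) : ℝ) ^ (2 * r) * (n * q) ^ 2 * 27 ^ (r + 1) := by gcongr
    _ = (108 * (r + 1 : ℕ)) ^ (r + 1) * ((n : ℝ) * q) ^ 2 * ((r + 1 : ℕ) : ℝ) ^ (r + 1 - 2) := by
        rw [show 2 * r = r + 1 + (r + 1 - 2) by lia, show (108 : ℝ) = 4 * 27 by norm_num,
          mul_pow _ ((r + 1 : ℕ) : ℝ), mul_pow (4 : ℝ), pow_add _ (r + 1)]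
        ring

lemma integral_abs_sq_sub_self_sub_pow_binomial_le_of_le {d : ℕ} (hd : 2 ≤ d)
    (hnd : (n : ℝ) * q ≤ d) :
    ∫ k, |((k : ℝ) ^ 2 - k) - n * (n - 1) * (q : ℝ) ^ 2| ^ d ∂Bin(n, q) ≤
      (109 * d) ^ d * ((n : ℝ) * q) ^ 2 * (d : ℝ) ^ (d - 2) := by
  have h_mean_nonneg := natCast_mul_sub_one_mul_sq_nonneg n q
  have hm : 0 ≤ (n : ℝ) * q := mul_nonneg n.cast_nonneg q.2.1
  have h_mean : (n * (n - 1) * (q : ℝ) ^ 2) ^ d ≤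
      (d : ℝ) ^ d * ((n : ℝ) * q) ^ 2 * (d : ℝ) ^ (d - 2) := by
    calc (n * (n - 1) * (q : ℝ) ^ 2) ^ d ≤ (((n : ℝ) * q) ^ 2) ^ d := by
          gcongr
          exact natCast_mul_sub_one_mul_sq_le n q
      _ = ((n : ℝ) * q) ^ d * ((n : ℝ) * q) ^ 2 * ((n : ℝ) * q) ^ (d - 2) := by
          rw [← pow_mul, ← pow_add, ← pow_add]
          congr 1
          lia
      _ ≤ (d : ℝ) ^ d * ((n : ℝ) * q) ^ 2 * (d : ℝ) ^ (d - 2) := by gcongr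
  calc ∫ k, |((k : ℝ) ^ 2 - k) - n * (n - 1) * (q : ℝ) ^ 2| ^ d ∂Bin(n, q)
      ≤ ∫ k, (((k : ℝ) ^ 2 - k) ^ d + (n * (n - 1) * (q : ℝ) ^ 2) ^ d) ∂Bin(n, q) :=
        integral_mono (integrable_binomial _) (integrable_binomial _) fun k ↦
          abs_sub_pow_le_pow_add_pow (natCast_sq_sub_self_nonneg k) h_mean_nonneg d
    _ = ∫ k, ((k : ℝ) ^ 2 - k) ^ d ∂Bin(n, q) + (n * (n - 1) * (q : ℝ) ^ 2) ^ d := by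
        rw [integral_add (integrable_binomial _) (integrable_const _)]
        simp
    _ ≤ (108 * d) ^ d * ((n : ℝ) * q) ^ 2 * (d : ℝ) ^ (d - 2) +
          (d : ℝ) ^ d * ((n : ℝ) * q) ^ 2 * (d : ℝ) ^ (d - 2) :=
        add_le_add (integral_sq_sub_self_pow_binomial_le n q hd hnd) h_mean
    _ = ((108 * d) ^ d + (d : ℝ) ^ d) * ((n : ℝ) * q) ^ 2 * (d : ℝ) ^ (d - 2) := by ring
    _ ≤ (108 * d + d) ^ d * ((n : ℝ) * q) ^ 2 * (d : ℝ) ^ (d - 2) := by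
        gcongr
        exact pow_add_pow_le (by positivity) d.cast_nonneg (by lia)
    _ = (109 * d) ^ d * ((n : ℝ) * q) ^ 2 * (d : ℝ) ^ (d - 2) := by ring

lemma abs_sq_sub_self_sub_le (hm : 1 ≤ 2 * (n * q : ℝ)) (x : ℝ) :
    |(x ^ 2 - x) - n * (n - 1) * (q : ℝ) ^ 2| ≤
      (x - n * q) ^ 2 + 2 * (n * q) * |x - n * q| + n * q := by
  have hq : (0 : ℝ) ≤ q := q.2.1
  have h_expand : (x ^ 2 - x) - n * (n - 1) * (q : ℝ) ^ 2 =
      (x - n * q) ^ 2 + (2 * (n * q) - 1) * (x - n * q) - n * q * (1 - q) := by ring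
  rw [h_expand]
  refine (abs_sub _ _).trans (add_le_add ((abs_add_le _ _).trans (add_le_add ?_ ?_)) ?_)
  · rw [abs_of_nonneg (sq_nonneg _)]
  · rw [abs_mul, abs_of_nonneg (by linarith : 0 ≤ 2 * (n * q : ℝ) - 1)]
    gcongr
    linarith
  · rw [abs_of_nonneg (mul_nonneg (by positivity) (sub_nonneg.2 q.2.2))]
    exact mul_le_of_le_one_right (by positivity) (sub_le_self 1 hq)

lemma integral_abs_sq_sub_self_sub_pow_binomial_le_integral_sub_mean_pow {h : ℕ}
    (hm : 1 ≤ 2 * (n * q : ℝ)) :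
    ∫ k, |((k : ℝ) ^ 2 - k) - n * (n - 1) * (q : ℝ) ^ 2| ^ (2 * h) ∂Bin(n, q) ≤
      9 ^ h * (∫ k, ((k : ℝ) - n * q) ^ (2 * (2 * h)) ∂Bin(n, q) +
        (2 * (n * q)) ^ (2 * h) * ∫ k, ((k : ℝ) - n * q) ^ (2 * h) ∂Bin(n, q) +
        (n * q) ^ (2 * h)) := by
  have hq : (0 : ℝ) ≤ q := q.2.1
  have h_pow (k : ℕ) : |((k : ℝ) ^ 2 - k) - n * (n - 1) * (q : ℝ) ^ 2| ^ (2 * h) ≤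
      9 ^ h * (((k : ℝ) - n * q) ^ (2 * (2 * h)) +
        (2 * (n * q)) ^ (2 * h) * ((k : ℝ) - n * q) ^ (2 * h) + (n * q) ^ (2 * h)) := by
    calc |((k : ℝ) ^ 2 - k) - n * (n - 1) * (q : ℝ) ^ 2| ^ (2 * h)
        ≤ (((k : ℝ) - n * q) ^ 2 + 2 * (n * q) * |(k : ℝ) - n * q| + n * q) ^ (2 * h) := by
          gcongr
          exact abs_sq_sub_self_sub_le n q hm k
      _ ≤ 3 ^ (2 * h - 1) * ((((k : ℝ) - n * q) ^ 2) ^ (2 * h) +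
            (2 * (n * q) * |(k : ℝ) - n * q|) ^ (2 * h) + (n * q) ^ (2 * h)) :=
          add_add_pow_le (sq_nonneg _) (by positivity) (by positivity) _
      _ ≤ 3 ^ (2 * h) * ((((k : ℝ) - n * q) ^ 2) ^ (2 * h) +
            (2 * (n * q) * |(k : ℝ) - n * q|) ^ (2 * h) + (n * q) ^ (2 * h)) := by
          gcongr
          · norm_num
          · lia
      _ = _ := by
          rw [← pow_mul, mul_pow _ |_|, (even_two_mul h).pow_abs, pow_mul 3]
          norm_num
  refine (integral_mono (integrable_binomial _) (integrable_binomial _) h_pow).trans_eq ?_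
  rw [integral_const_mul, integral_add (integrable_binomial _) (integrable_const _),
    integral_add (integrable_binomial _) (integrable_binomial _), integral_const_mul]
  simp

lemma integral_abs_sq_sub_self_sub_pow_binomial_le_of_ge {h : ℕ} (hh : 0 < h)
    (hhn : (2 * h : ℕ) ≤ (n : ℝ) * q) :
    ∫ k, |((k : ℝ) ^ 2 - k) - n * (n - 1) * (q : ℝ) ^ 2| ^ (2 * h) ∂Bin(n, q) ≤
      (6480 * (2 * h : ℕ) * ((n : ℝ) * q) ^ 3) ^ h := by
  have hh' : (1 : ℝ) ≤ h := by exact_mod_cast hh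
  have h_quartic := integral_sub_mean_pow_binomial_le n q (by lia : 0 < 2 * h) hhn
  push_cast at hhn h_quartic ⊢
  have h_quadratic := integral_sub_mean_pow_binomial_le n q hh (by linarith)
  have hm : 0 ≤ (n : ℝ) * q := by linarith
  calc ∫ k, |((k : ℝ) ^ 2 - k) - n * (n - 1) * (q : ℝ) ^ 2| ^ (2 * h) ∂Bin(n, q)
      ≤ 9 ^ h * (∫ k, ((k : ℝ) - n * q) ^ (2 * (2 * h)) ∂Bin(n, q) +
          (2 * (n * q)) ^ (2 * h) * ∫ k, ((k : ℝ) - n * q) ^ (2 * h) ∂Bin(n, q) +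
          (n * q) ^ (2 * h)) :=
        integral_abs_sq_sub_self_sub_pow_binomial_le_integral_sub_mean_pow n q (by linarith)
    _ ≤ 9 ^ h * (2 * (12 * (2 * h) * (n * q)) ^ (2 * h) +
          (2 * (n * q)) ^ (2 * h) * (2 * (12 * h * (n * q)) ^ h) + (n * q) ^ (2 * h)) := by
        gcongr
    _ ≤ 9 ^ h * (5 * (144 * (2 * h) * (n * q) ^ 3) ^ h) := by
        gcongr
        exact two_mul_pow_add_pow_mul_pow_add_pow_le hh hhn
    _ ≤ 9 ^ h * (5 ^ h * (144 * (2 * h) * (n * q) ^ 3) ^ h) := by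
        gcongr
        exact le_self_pow₀ (by norm_num) hh.ne'
    _ = (6480 * (2 * h) * ((n : ℝ) * q) ^ 3) ^ h := by
        rw [← mul_pow, ← mul_pow]
        congr 1
        ring

lemma integral_abs_sq_sub_self_sub_pow_binomial_le {d : ℕ} (hd : 2 ≤ d) (hd_even : Even d) :
    ∫ k, |((k : ℝ) ^ 2 - k) - n * (n - 1) * (q : ℝ) ^ 2| ^ d ∂Bin(n, q) ≤
      (6480 * d) ^ d * ((n : ℝ) * q) ^ 2 * max (d : ℝ) (n * q) ^ (d - 2) +
        (6480 * d) ^ (d / 2) * ((n : ℝ) * q) ^ (d + 1) * max (d : ℝ) (n * q) ^ (d / 2 - 1) := by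
  have hm : 0 ≤ (n : ℝ) * q := mul_nonneg n.cast_nonneg q.2.1
  obtain hnd | hdn := le_total ((n : ℝ) * q) d
  · rw [max_eq_left hnd]
    refine le_add_of_le_of_nonneg ?_ (by positivity)
    refine (integral_abs_sq_sub_self_sub_pow_binomial_le_of_le n q hd hnd).trans ?_
    gcongr
    norm_num
  · obtain ⟨h, rfl⟩ := even_iff_exists_two_mul.1 hd_even
    rw [max_eq_right hdn]
    refine le_add_of_nonneg_of_le (by positivity) ?_
    calc ∫ k, |((k : ℝ) ^ 2 - k) - n * (n - 1) * (q : ℝ) ^ 2| ^ (2 * h) ∂Bin(n, q)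
        ≤ (6480 * (2 * h : ℕ) * ((n : ℝ) * q) ^ 3) ^ h :=
          integral_abs_sq_sub_self_sub_pow_binomial_le_of_ge n q (by lia) hdn
      _ = (6480 * (2 * h : ℕ)) ^ h * (((n : ℝ) * q) ^ (2 * h + 1) * ((n : ℝ) * q) ^ (h - 1)) := by
          rw [mul_pow, ← pow_mul, ← pow_add, show 3 * h = 2 * h + 1 + (h - 1) by lia]
      _ = _ := by rw [Nat.mul_div_cancel_left h two_pos, mul_assoc]

end Binomial

lemma hasLaw_binCount {α : Type} [DecidableEq α] [MeasurableSpace α] [MeasurableSingletonClass α]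
    {μ : Measure α} [IsProbabilityMeasure μ] (n : ℕ) (x : α) {q : unitInterval}
    (hq : μ.real {x} = q) :
    HasLaw (binCount n x) Bin(n, q) (Measure.pi fun _ ↦ μ) := by
  have h := hasLaw_card_filter_pi (ι := Fin n) (measurableSet_eq (a := x)) hq
  rwa [Fintype.card_fin] at h

theorem bin_contribution_moments_general :
    ∃ C : ℝ, 0 < C ∧
      ∀ (α : Type) [DecidableEq α] [MeasurableSpace α] [MeasurableSingletonClass α]
        (μ : Measure α) [IsProbabilityMeasure μ] (n : ℕ) (x : α) (d : ℕ), 2 ≤ d → Even d →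
        (∫ ω, |((binCount n x ω : ℝ) ^ 2 - (binCount n x ω : ℝ)) -
            ∫ ω', ((binCount n x ω' : ℝ) ^ 2 - (binCount n x ω' : ℝ))
              ∂(Measure.pi fun _ : Fin n => μ)| ^ d
          ∂(Measure.pi fun _ : Fin n => μ))
        ≤ (C * d) ^ d * ((n : ℝ) * μ.real {x}) ^ 2 * (max (d : ℝ) ((n : ℝ) * μ.real {x})) ^ (d - 2)
          + (C * d) ^ (d / 2) * ((n : ℝ) * μ.real {x}) ^ (d + 1) *
            (max (d : ℝ) ((n : ℝ) * μ.real {x})) ^ (d / 2 - 1) := by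
  refine ⟨6480, by norm_num, fun α _ _ _ μ _ n x d hd hd_even ↦ ?_⟩
  let q : unitInterval := ⟨μ.real {x}, measureReal_nonneg, measureReal_le_one⟩
  have h_law : HasLaw (binCount n x) Bin(n, q) (Measure.pi fun _ ↦ μ) := hasLaw_binCount n x rfl
  have h_transfer (f : ℕ → ℝ) :
      ∫ ω, f (binCount n x ω) ∂(Measure.pi fun _ ↦ μ) = ∫ k, f k ∂Bin(n, q) :=
    h_law.integral_comp (integrable_binomial f).aestronglyMeasurable
  rw [h_transfer fun k ↦ (k : ℝ) ^ 2 - k, integral_sq_sub_self_binomial,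
    h_transfer fun k ↦ |((k : ℝ) ^ 2 - k) - n * (n - 1) * (q : ℝ) ^ 2| ^ d]
  exact integral_abs_sq_sub_self_sub_pow_binomial_le n q hd hd_even

/-- Moments of the centered bin contributions. -/
theorem bin_contribution_moments :
    ∃ C : ℝ, 0 < C ∧
      ∀ (α : Type) [Fintype α] [DecidableEq α] [MeasurableSpace α] [MeasurableSingletonClass α]
        (p : α → ℝ), (∀ x, 0 ≤ p x) → (∑ x, p x = 1) →
      ∀ (μ : Measure α) [IsProbabilityMeasure μ], (∀ x, μ {x} = ENNReal.ofReal (p x)) →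
      ∀ (n : ℕ), 2 ≤ n → ∀ x : α, 0 < p x →
      ∀ (d : ℕ), 2 ≤ d → Even d →
        (∫ ω, |((binCount n x ω : ℝ) ^ 2 - (binCount n x ω : ℝ)) -
            ∫ ω', ((binCount n x ω' : ℝ) ^ 2 - (binCount n x ω' : ℝ))
              ∂(Measure.pi fun _ : Fin n => μ)| ^ d
          ∂(Measure.pi fun _ : Fin n => μ))
        ≤ (C * d) ^ d * ((n : ℝ) * p x) ^ 2 * (max (d : ℝ) ((n : ℝ) * p x)) ^ (d - 2)
          + (C * d) ^ (d / 2) * ((n : ℝ) * p x) ^ (d + 1) *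
            (max (d : ℝ) ((n : ℝ) * p x)) ^ (d / 2 - 1) := by
  obtain ⟨C, hC, h_bound⟩ := bin_contribution_moments_general
  refine ⟨C, hC, fun α _ _ _ _ p hp _ μ _ hμ n _ x _ d hd hd_even ↦ ?_⟩
  have hx : μ.real {x} = p x := by rw [measureReal_def, hμ, ENNReal.toReal_ofReal (hp x)]
  exact hx ▸ h_bound α μ n x d hd hd_even
end
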